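/- arXiv:2309.07744 — 5 statements merged into one kernel-verified Lean document; each statement's English description precedes it below -/
import Mathlib

section
/- For every prime power q and every integer d ≥ 2, the point-hyperplane incidence graph I_{q,d} is ((q^d − 1)/(q − 1), q^{d−1})-regular: every point of 𝔽_q^d is incident to exactly (q^d − 1)/(q − 1) hyperplanes and every hyperplane contains exactly q^{d−1} points. Moreover, the second largest eigenvalue of the (real symmetric) adjacency matrix of I_{q,d} equals q^{(d−1)/2} (i.e., the square root of q^{d−1}). -/
open scoped Classical

noncomputable section

/-- A hyperplane in `𝔽_q^d` is a `(d-1)`-dimensional affine subspace. -/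
def IsHyperplane (F : Type*) [Field F] (d : ℕ) (π : AffineSubspace F (Fin d → F)) : Prop :=
  (π : Set (Fin d → F)).Nonempty ∧ Module.finrank F π.direction = d - 1

/-- The set of hyperplanes in `𝔽_q^d`. -/
def Hyp (F : Type*) [Field F] (d : ℕ) : Type _ :=
  {π : AffineSubspace F (Fin d → F) // IsHyperplane F d π}

instance (F : Type*) [Field F] [Fintype F] (d : ℕ) : Finite (Hyp F d) := by
  have h1 : Finite (AffineSubspace F (Fin d → F)) :=
    Finite.of_injective (fun π => (π : Set (Fin d → F))) SetLike.coe_injective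
  exact Subtype.finite

/-- Vertices of the point–hyperplane incidence graph: points ⊕ hyperplanes. -/
def Vtx (F : Type*) [Field F] (d : ℕ) : Type _ := (Fin d → F) ⊕ Hyp F d

instance (F : Type*) [Field F] [Fintype F] (d : ℕ) : Finite (Vtx F d) := by
  unfold Vtx; infer_instance

instance (F : Type*) [Field F] [Fintype F] (d : ℕ) : Fintype (Vtx F d) :=
  Fintype.ofFinite _

/-- The adjacency matrix of the point–hyperplane incidence graph `I_{q,d}`. -/
def adjA (F : Type*) [Field F] (d : ℕ) : Matrix (Vtx F d) (Vtx F d) ℝ :=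
  fun u v =>
    match u, v with
    | Sum.inl p, Sum.inr π => if p ∈ π.1 then 1 else 0
    | Sum.inr π, Sum.inl p => if p ∈ π.1 then 1 else 0
    | _, _ => 0

/-- The matrix whose `(u,v)`-entry is `1` iff exactly one of `u, v` is a point and the
other is a hyperplane. -/
def matB (F : Type*) [Field F] (d : ℕ) : Matrix (Vtx F d) (Vtx F d) ℝ :=
  fun u v =>
    match u, v with
    | Sum.inl _, Sum.inr _ => 1
    | Sum.inr _, Sum.inl _ => 1
    | _, _ => 0


/-- `μ` is an eigenvalue of the real matrix `A`. -/
def IsEigenvalue {V : Type*} [Fintype V] (A : Matrix V V ℝ) (μ : ℝ) : Prop :=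
  ∃ v : V → ℝ, v ≠ 0 ∧ A.mulVec v = μ • v

theorem aux_fr (F : Type) [Field F] (d : ℕ) (p : Fin d → F) :
    Module.finrank F (Submodule.span F {p - p}) = 0 := by
  rw [sub_self, Submodule.span_zero_singleton, finrank_bot]

theorem aux_sub_count (F : Type) [Field F] [Fintype F] (d : ℕ) (hd : 2 ≤ d) (x : Fin d → F) :
    (Fintype.card F - 1) * {K : Submodule F (Fin d → F) | Module.finrank F K = d - 1 ∧ x ∈ K}.ncard
      = Fintype.card F ^ (d - Module.finrank F (Submodule.span F {x})) - 1 := by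
  have hfin : Finite (Submodule F (Fin d → F)) :=
    Finite.of_injective (fun π => (π : Set (Fin d → F))) SetLike.coe_injective
  have : Fintype (Submodule F (Fin d → F)) := Fintype.ofFinite _
  have : Finite (Module.Dual F (Fin d → F)) := Module.finite_of_finite F
  have : Fintype (Module.Dual F (Fin d → F)) := Fintype.ofFinite _
  have hcardann : ∀ W : Submodule F (Fin d → F),
      (Finset.univ.filter (fun φ : Module.Dual F (Fin d → F) => φ ∈ W.dualAnnihilator ∧ φ ≠ 0)).card
        = Fintype.card F ^ (d - Module.finrank F W) - 1 := by
    intro W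
    have h1 : Module.finrank F W.dualAnnihilator = d - Module.finrank F W := by
      have := Subspace.finrank_add_finrank_dualAnnihilator_eq W
      simp at this
      omega
    have h2 : Fintype.card W.dualAnnihilator = Fintype.card F ^ (d - Module.finrank F W) := by
      rw [← h1]; exact Module.card_eq_pow_finrank (K := F) (V := W.dualAnnihilator)
    rw [← h2, Fintype.card_subtype, Finset.filter_and_not]
    rw [Finset.card_sdiff_of_subset]
    · congr 1
      rw [Finset.card_eq_one]
      refine ⟨0, ?_⟩
      ext φ; simp
    · intro φ; simp +contextual
  have hker : ∀ φ : Module.Dual F (Fin d → F), φ ≠ 0 → Module.finrank F (LinearMap.ker φ) = d - 1 := by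
    intro φ hφ
    have := Module.Dual.finrank_ker_add_one_of_ne_zero hφ
    simp at this
    omega
  rw [← hcardann, Set.ncard_eq_toFinset_card']
  rw [Finset.card_eq_sum_card_fiberwise (f := fun φ => LinearMap.ker φ)
    (t := {K : Submodule F (Fin d → F) | Module.finrank F K = d - 1 ∧ x ∈ K}.toFinset)]
  · rw [Finset.sum_const_nat (m := Fintype.card F - 1), mul_comm]
    intro K hK
    simp at hK
    have h3 := hcardann K
    rw [hK.1, show d - (d - 1) = 1 by omega, pow_one] at h3
    rw [← h3]
    congr 1
    ext φ
    simp only [Finset.mem_filter, Finset.mem_univ, true_and, Submodule.mem_dualAnnihilator]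
    constructor
    · rintro ⟨⟨h4, h5⟩, rfl⟩
      exact ⟨fun w hw => hw, h5⟩
    · rintro ⟨h4, h5⟩
      have hle : K ≤ LinearMap.ker φ := fun w hw => h4 w hw
      have heq : K = LinearMap.ker φ :=
        Submodule.eq_of_le_of_finrank_eq hle (by rw [hK.1, hker φ h5])
      refine ⟨⟨?_, h5⟩, heq.symm⟩
      intro w hw
      obtain ⟨a, rfl⟩ := Submodule.mem_span_singleton.1 hw
      have := h4 x hK.2
      simp [this]
  · intro φ hφ
    simp only [Finset.coe_filter, Finset.mem_univ, true_and, Set.mem_ofPred_eq,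
      Submodule.mem_dualAnnihilator] at hφ
    simp only [Set.coe_toFinset, Set.mem_ofPred_eq, LinearMap.mem_ker]
    exact ⟨hker φ hφ.2, hφ.1 x (Submodule.mem_span_singleton_self x)⟩

theorem aux_hyp_count (F : Type) [Field F] [Fintype F] (d : ℕ) (p p' : Fin d → F) :
    {π : Hyp F d | p ∈ π.1 ∧ p' ∈ π.1}.ncard =
      {K : Submodule F (Fin d → F) | Module.finrank F K = d - 1 ∧ p' - p ∈ K}.ncard := by
  apply Set.ncard_congr (fun π _ => π.1.direction)
  · rintro ⟨π, hπ⟩ ⟨h1, h2⟩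
    exact ⟨hπ.2, AffineSubspace.vsub_mem_direction h2 h1⟩
  · rintro ⟨π, hπ⟩ ⟨π', hπ'⟩ ⟨h1, h2⟩ ⟨h3, h4⟩ h
    apply Subtype.ext
    exact AffineSubspace.ext_of_direction_eq h ⟨p, h1, h3⟩
  · rintro K ⟨h1, h2⟩
    refine ⟨⟨AffineSubspace.mk' p K, ⟨p, AffineSubspace.self_mem_mk' p K⟩, ?_⟩, ⟨?_, ?_⟩, ?_⟩
    · rw [AffineSubspace.direction_mk']; exact h1
    · exact AffineSubspace.self_mem_mk' p K
    · exact (AffineSubspace.mem_mk' ).2 h2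
    · exact AffineSubspace.direction_mk' p K

theorem aux_hyp_card (F : Type) [Field F] [Fintype F] (d : ℕ) (π : Hyp F d) :
    ((π.1 : Set (Fin d → F))).ncard = Fintype.card F ^ (d - 1) := by
  obtain ⟨π, ⟨p, hp⟩, h⟩ := π
  have h1 : Fintype.card π.direction = Fintype.card F ^ (d - 1) := by
    rw [← h]; exact Module.card_eq_pow_finrank
  rw [← h1, ← Nat.card_eq_fintype_card]
  change _ = (π.direction : Set (Fin d → F)).ncard
  symm
  apply Set.ncard_congr (fun v _ => v + p)
  · intro v hv
    exact AffineSubspace.vadd_mem_of_mem_direction hv hp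
  · intro a b _ _ h; simpa using h
  · intro b hb
    exact ⟨b - p, AffineSubspace.vsub_mem_direction hb hp, by simp⟩

instance auxHypFintype (F : Type) [Field F] [Fintype F] (d : ℕ) : Fintype (Hyp F d) :=
  Fintype.ofFinite _

/-- incidence indicator -/
def auxN (F : Type) [Field F] (d : ℕ) (p : Fin d → F) (π : Hyp F d) : ℝ :=
  if p ∈ π.1 then 1 else 0

theorem aux_sum_vtx (F : Type) [Field F] [Fintype F] (d : ℕ) (f : Vtx F d → ℝ) :
    ∑ v, f v = ∑ p : Fin d → F, f (Sum.inl p) + ∑ π : Hyp F d, f (Sum.inr π) := by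
  have h := Fintype.sum_sum_type (fun x : (Fin d → F) ⊕ Hyp F d => f x)
  refine Eq.trans ?_ h
  have hi : (instFintypeVtx F d) = (instFintypeSum (Fin d → F) (Hyp F d)) := Subsingleton.elim _ _
  rw [hi]
  rfl

theorem aux_eigen_iff (F : Type) [Field F] [Fintype F] (d : ℕ) (μ : ℝ) (v : Vtx F d → ℝ) :
    (adjA F d).mulVec v = μ • v ↔
      (∀ p, ∑ π, auxN F d p π * v (Sum.inr π) = μ * v (Sum.inl p)) ∧
      (∀ π, ∑ p, auxN F d p π * v (Sum.inl p) = μ * v (Sum.inr π)) := by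
  have h1 : ∀ p, (adjA F d).mulVec v (Sum.inl p) = ∑ π, auxN F d p π * v (Sum.inr π) := by
    intro p
    simp only [Matrix.mulVec, dotProduct]
    rw [aux_sum_vtx]
    simp [adjA, auxN]
  have h2 : ∀ π, (adjA F d).mulVec v (Sum.inr π) = ∑ p, auxN F d p π * v (Sum.inl p) := by
    intro p
    simp only [Matrix.mulVec, dotProduct]
    rw [aux_sum_vtx]
    simp [adjA, auxN]
  constructor
  · intro h
    exact ⟨fun p => by rw [← h1, h]; rfl, fun p => by rw [← h2, h]; rfl⟩
  · rintro ⟨h3, h4⟩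
    funext u
    rcases u with p | π
    · rw [h1, h3]; rfl
    · rw [h2, h4]; rfl

theorem aux_N_col (F : Type) [Field F] [Fintype F] (d : ℕ) (π : Hyp F d) :
    ∑ p, auxN F d p π = (Fintype.card F : ℝ) ^ (d - 1) := by
  have := aux_hyp_card F d π
  rw [Set.ncard_eq_toFinset_card'] at this
  simp only [auxN, Finset.sum_boole]
  rw [← Nat.cast_pow, ← this]
  congr 2
  ext; simp

theorem aux_N_pair (F : Type) [Field F] [Fintype F] (d : ℕ) (hd : 2 ≤ d) (p p' : Fin d → F) :
    ((Fintype.card F : ℝ) - 1) * ∑ π, auxN F d p π * auxN F d p' π =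
      ((Fintype.card F : ℝ) ^ (d - 1) - 1) +
       if p = p' then ((Fintype.card F : ℝ) - 1) * (Fintype.card F : ℝ) ^ (d - 1) else 0 := by
  have h := aux_sub_count F d hd (p' - p)
  rw [← aux_hyp_count, Set.ncard_eq_toFinset_card'] at h
  have hc : 1 ≤ Fintype.card F := Fintype.card_pos
  have h' := congrArg (Nat.cast : ℕ → ℝ) h
  rw [Nat.cast_mul, Nat.cast_sub hc, Nat.cast_sub (Nat.one_le_pow _ _ hc)] at h'
  have h2 : ∑ π, auxN F d p π * auxN F d p' π =
      (({π : Hyp F d | p ∈ π.1 ∧ p' ∈ π.1}.toFinset.card : ℕ) : ℝ) := by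
    simp only [auxN, ← ite_and, mul_ite, mul_one, mul_zero]
    rw [Finset.sum_boole]
    congr 2
    ext; simp [and_comm]
  rw [h2]
  push_cast at h'
  rw [h']
  split_ifs with hp
  · subst hp
    rw [aux_fr, Nat.sub_zero]
    obtain ⟨k, rfl⟩ : ∃ k, d = k + 1 := ⟨d - 1, by omega⟩
    rw [Nat.add_sub_cancel]; ring
  · rw [finrank_span_singleton (sub_ne_zero.2 (Ne.symm hp))]; simp

theorem aux_NNT (F : Type) [Field F] [Fintype F] (d : ℕ) (hd : 2 ≤ d) (c Q : ℝ)
    (hQ : Q = (Fintype.card F : ℝ) ^ (d - 1)) (hc : c = (Q - 1) / ((Fintype.card F : ℝ) - 1))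
    (f : (Fin d → F) → ℝ) (p : Fin d → F) :
    ∑ π, auxN F d p π * ∑ p', auxN F d p' π * f p' = c * ∑ p', f p' + Q * f p := by
  have hq : (0:ℝ) < (Fintype.card F : ℝ) - 1 := by
    have : 1 < Fintype.card F := Fintype.one_lt_card
    have : (1:ℝ) < Fintype.card F := by exact_mod_cast this
    linarith
  have h1 : ∀ p', ∑ π, auxN F d p π * auxN F d p' π = c + if p = p' then Q else 0 := by
    intro p'
    have := aux_N_pair F d hd p p'
    rw [← hQ] at this
    have h3 : ((Fintype.card F : ℝ) - 1) * c = Q - 1 := by rw [hc]; field_simp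
    apply mul_left_cancel₀ hq.ne'
    rw [this, mul_add, h3]
    split_ifs <;> ring
  simp_rw [Finset.mul_sum]
  rw [Finset.sum_comm]
  simp_rw [← mul_assoc, ← Finset.sum_mul, h1, add_mul, Finset.sum_add_distrib]
  simp


theorem aux_key (F : Type) [Field F] [Fintype F] (d : ℕ) (hd : 2 ≤ d) (c Q L μ : ℝ)
    (hQ : Q = (Fintype.card F : ℝ) ^ (d - 1)) (hc : c = (Q - 1) / ((Fintype.card F : ℝ) - 1))
    (hL : L = c * (Fintype.card F : ℝ) ^ d + Q) (v : Vtx F d → ℝ)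
    (hv : (adjA F d).mulVec v = μ • v) :
    (∀ p : Fin d → F, μ * μ * v (Sum.inl p) =
      c * ∑ p' : Fin d → F, v (Sum.inl p') + Q * v (Sum.inl p)) ∧
    μ * μ * ∑ p' : Fin d → F, v (Sum.inl p') = L * ∑ p' : Fin d → F, v (Sum.inl p') := by
  obtain ⟨h1, h2⟩ := (aux_eigen_iff F d μ v).1 hv
  have h3 : ∀ p : Fin d → F, μ * μ * v (Sum.inl p) =
      c * ∑ p' : Fin d → F, v (Sum.inl p') + Q * v (Sum.inl p) := by
    intro p
    have h := aux_NNT F d hd c Q hQ hc (fun p => v (Sum.inl p)) p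
    rw [← h, mul_assoc, ← h1, Finset.mul_sum]
    apply Finset.sum_congr rfl
    intro π _
    rw [h2]; ring
  refine ⟨h3, ?_⟩
  rw [Finset.mul_sum, Finset.sum_congr rfl (fun p _ => h3 p), Finset.sum_add_distrib,
    ← Finset.mul_sum (f := fun p : Fin d → F => v (Sum.inl p)), hL]
  simp
  ring

theorem aux_zero (F : Type) [Field F] [Fintype F] (d : ℕ) (μ : ℝ) (hμ : μ ≠ 0) (v : Vtx F d → ℝ)
    (hv : (adjA F d).mulVec v = μ • v) (h0 : ∀ p : Fin d → F, v (Sum.inl p) = 0) : v = 0 := by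
  obtain ⟨h1, h2⟩ := (aux_eigen_iff F d μ v).1 hv
  funext u
  rcases u with p | π
  · exact h0 p
  · have := h2 π
    simp only [h0, mul_zero, Finset.sum_const_zero] at this
    exact (mul_eq_zero.1 this.symm).resolve_left hμ

/-- Extend a function on points to a candidate eigenvector. -/
def auxExt (F : Type) [Field F] [Fintype F] (d : ℕ) (μ : ℝ) (f : (Fin d → F) → ℝ) : Vtx F d → ℝ :=
  fun u => match u with
    | Sum.inl p => f p
    | Sum.inr π => (∑ p, auxN F d p π * f p) / μ

theorem aux_ext_eigen (F : Type) [Field F] [Fintype F] (d : ℕ) (hd : 2 ≤ d) (c Q μ : ℝ)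
    (hμ : μ ≠ 0)
    (hQ : Q = (Fintype.card F : ℝ) ^ (d - 1)) (hc : c = (Q - 1) / ((Fintype.card F : ℝ) - 1))
    (f : (Fin d → F) → ℝ) (hf : f ≠ 0) (h : ∀ p, c * ∑ p', f p' + Q * f p = μ * μ * f p) :
    IsEigenvalue (adjA F d) μ := by
  refine ⟨auxExt F d μ f, ?_, ?_⟩
  · intro h0
    apply hf
    funext p
    exact congrFun h0 (Sum.inl p)
  · rw [aux_eigen_iff]
    constructor
    · intro p
      change ∑ π, auxN F d p π * ((∑ p, auxN F d p π * f p) / μ) = μ * f p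
      simp_rw [← mul_div_assoc]
      rw [← Finset.sum_div, aux_NNT F d hd c Q hQ hc, h]
      field_simp
    · intro π
      change ∑ p, auxN F d p π * f p = μ * ((∑ p, auxN F d p π * f p) / μ)
      field_simp

/-- The point–hyperplane incidence graph `I_{q,d}` is
`((q^d−1)/(q−1), q^{d−1})`-regular, and the second largest eigenvalue of its adjacency
matrix equals `√(q^{d−1})`.  The largest eigenvalue is `λ₁ = √((q^d−1)/(q−1) · q^{d−1})`;
"second largest eigenvalue equals `√(q^{d−1})`" is expressed by: `λ₁` is an eigenvalue
bounding all others, its eigenspace is one-dimensional, `√(q^{d−1})` is an eigenvalue, and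
every eigenvalue is either `λ₁` or at most `√(q^{d−1})`. -/
theorem incidence_graph_regular_and_second_eigenvalue
    (q d : ℕ) (hq : IsPrimePow q) (hd : 2 ≤ d)
    (F : Type) [Field F] [Fintype F] (hF : Fintype.card F = q) :
    (∀ p : Fin d → F, {π : Hyp F d | p ∈ π.1}.ncard = (q ^ d - 1) / (q - 1)) ∧
    (∀ π : Hyp F d, ((π.1 : Set (Fin d → F))).ncard = q ^ (d - 1)) ∧
    (IsEigenvalue (adjA F d)
        (Real.sqrt ((((q : ℝ) ^ d - 1) / ((q : ℝ) - 1)) * (q : ℝ) ^ (d - 1))) ∧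
      (∀ μ : ℝ, IsEigenvalue (adjA F d) μ →
        μ ≤ Real.sqrt ((((q : ℝ) ^ d - 1) / ((q : ℝ) - 1)) * (q : ℝ) ^ (d - 1))) ∧
      (∀ v w : Vtx F d → ℝ,
        (adjA F d).mulVec v =
          Real.sqrt ((((q : ℝ) ^ d - 1) / ((q : ℝ) - 1)) * (q : ℝ) ^ (d - 1)) • v →
        (adjA F d).mulVec w =
          Real.sqrt ((((q : ℝ) ^ d - 1) / ((q : ℝ) - 1)) * (q : ℝ) ^ (d - 1)) • w →
        ¬ LinearIndependent ℝ ![v, w]) ∧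
      IsEigenvalue (adjA F d) (Real.sqrt ((q : ℝ) ^ (d - 1))) ∧
      (∀ μ : ℝ, IsEigenvalue (adjA F d) μ →
        μ = Real.sqrt ((((q : ℝ) ^ d - 1) / ((q : ℝ) - 1)) * (q : ℝ) ^ (d - 1)) ∨
          μ ≤ Real.sqrt ((q : ℝ) ^ (d - 1)))) := by
  subst hF
  have hq1 : 1 < Fintype.card F := Fintype.one_lt_card
  have hq1' : (1:ℝ) < (Fintype.card F : ℝ) := by exact_mod_cast hq1
  refine ⟨?_, aux_hyp_card F d, ?_⟩
  · intro p
    have h := aux_sub_count F d hd (p - p)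
    rw [← aux_hyp_count] at h
    rw [aux_fr, Nat.sub_zero] at h
    simp only [and_self] at h
    rw [← h, Nat.mul_div_cancel_left _ (by omega)]
  obtain ⟨Q, hQ⟩ : ∃ Q : ℝ, Q = (Fintype.card F : ℝ) ^ (d - 1) := ⟨_, rfl⟩
  obtain ⟨c, hc⟩ : ∃ c : ℝ, c = (Q - 1) / ((Fintype.card F : ℝ) - 1) := ⟨_, rfl⟩
  obtain ⟨L, hL⟩ : ∃ L : ℝ, L = (((Fintype.card F : ℝ) ^ d - 1) / ((Fintype.card F : ℝ) - 1))
    * (Fintype.card F : ℝ) ^ (d - 1) := ⟨_, rfl⟩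
  rw [← hL, ← hQ]
  have hqd : (Fintype.card F : ℝ) ^ d = Fintype.card F * Q := by
    rw [hQ, ← pow_succ']; congr 1; omega
  have hQ1 : 1 < Q := by rw [hQ]; exact one_lt_pow₀ hq1' (by omega)
  have hqp : (0:ℝ) < (Fintype.card F : ℝ) - 1 := by linarith
  have hcpos : 0 < c := by rw [hc]; exact div_pos (by linarith) hqp
  have hL' : L = c * (Fintype.card F : ℝ) ^ d + Q := by
    rw [hL, hc, hqd, ← hQ]; field_simp; ring
  have hLQ : Q < L := by
    rw [hL', hqd]
    have : 0 < c * (Fintype.card F * Q) := by positivity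
    linarith
  have hsL : 0 < Real.sqrt L := Real.sqrt_pos.2 (by linarith)
  have hsQ : 0 < Real.sqrt Q := Real.sqrt_pos.2 (by linarith)
  have hsLL : Real.sqrt L * Real.sqrt L = L := Real.mul_self_sqrt (by linarith)
  have hsQQ : Real.sqrt Q * Real.sqrt Q = Q := Real.mul_self_sqrt (by linarith)
  have hle : Real.sqrt Q ≤ Real.sqrt L := Real.sqrt_le_sqrt hLQ.le
  have hlast : ∀ μ : ℝ, IsEigenvalue (adjA F d) μ → μ = Real.sqrt L ∨ μ ≤ Real.sqrt Q := by
    rintro μ ⟨v, hv0, hv⟩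
    obtain ⟨k1, k2⟩ := aux_key F d hd c Q L μ hQ hc hL' v hv
    by_cases hS : ∑ p' : Fin d → F, v (Sum.inl p') = 0
    · right
      by_contra hlt
      push Not at hlt
      apply hv0
      apply aux_zero F d μ (by linarith) v hv
      intro p
      have h := k1 p
      rw [hS] at h
      have h2 : (μ * μ - Q) * v (Sum.inl p) = 0 := by linarith
      refine (mul_eq_zero.1 h2).resolve_left ?_
      have : Real.sqrt Q * Real.sqrt Q < μ * μ := by nlinarith
      linarith
    · have h := mul_right_cancel₀ hS k2
      rw [← hsLL] at h
      rcases mul_self_eq_mul_self_iff.1 h with h | h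
      · exact Or.inl h
      · right; linarith
  refine ⟨?_, ?_, ?_, ?_, hlast⟩
  · apply aux_ext_eigen F d hd c Q _ hsL.ne' hQ hc (fun _ => 1)
    · intro h0
      have := congrFun h0 0
      simp at this
    · intro p
      rw [hsLL, hL']
      simp
  · intro μ hμ
    rcases hlast μ hμ with h | h <;> linarith
  · intro v w hv hw hli
    have hconst : ∀ u : Vtx F d → ℝ, (adjA F d).mulVec u = Real.sqrt L • u →
        ∀ p : Fin d → F, u (Sum.inl p) = u (Sum.inl (0 : Fin d → F)) := by
      intro u hu p
      obtain ⟨k1, -⟩ := aux_key F d hd c Q L _ hQ hc hL' u hu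
      have h1 := k1 p
      have h2 := k1 0
      rw [hsLL] at h1 h2
      have h3 : (L - Q) * (u (Sum.inl p) - u (Sum.inl (0 : Fin d → F))) = 0 := by linarith
      have := (mul_eq_zero.1 h3).resolve_left (by linarith)
      linarith
    obtain ⟨a, ha⟩ : ∃ a : ℝ, a = v (Sum.inl (0 : Fin d → F)) := ⟨_, rfl⟩
    obtain ⟨b, hb⟩ : ∃ b : ℝ, b = w (Sum.inl (0 : Fin d → F)) := ⟨_, rfl⟩
    have hz : b • v + (-a) • w = 0 := by
      apply aux_zero F d _ hsL.ne'
      · rw [Matrix.mulVec_add, Matrix.mulVec_smul, Matrix.mulVec_smul, hv, hw, smul_add,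
          smul_comm b, smul_comm (-a)]
      · intro p
        change b * v (Sum.inl p) + (-a) * w (Sum.inl p) = 0
        rw [hconst v hv p, hconst w hw p, ← ha, ← hb]; ring
    obtain ⟨hb0, ha0⟩ := LinearIndependent.pair_iff.1 hli b (-a) hz
    have hv0 : v = 0 := by
      apply aux_zero F d _ hsL.ne' v hv
      intro p
      rw [hconst v hv p, ← ha]; linarith
    have := hli.ne_zero 0
    exact this (by simpa using hv0)
  · have hd0 : 0 < d := by omega
    let e : Fin d → F := fun _ => 1
    have he : e ≠ 0 := by
      intro h
      have := congrFun h ⟨0, hd0⟩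
      simp [e] at this
    apply aux_ext_eigen F d hd c Q _ hsQ.ne' hQ hc
      (fun p => (if p = e then 1 else 0) - (if p = 0 then 1 else 0))
    · intro h0
      have := congrFun h0 e
      simp [he] at this
    · intro p
      rw [hsQQ, Finset.sum_sub_distrib]
      simp

end
end

section
/- For every prime power q and every integer d ≥ 2, the adjacency matrix A of the point-hyperplane incidence graph I_{q,d} satisfies the matrix identity A³ = ((q^d − 1)/(q − 1) − 1) · q^{d−2} · B + q^{d−1} · A, where B is the matrix indexed by 𝔽_q^d ⊔ ℍ_q^d whose (u,v)-entry equals 1 if exactly one of u, v is a point of 𝔽_q^d and the other is a hyperplane in ℍ_q^d, and 0 otherwise. -/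
open scoped Classical

noncomputable section

instance hypFintypeInst (F : Type*) [Field F] [Fintype F] (d : ℕ) : Fintype (Hyp F d) :=
  Fintype.ofFinite _

/-- A point as a vertex. -/
def vl {F : Type} [Field F] {d : ℕ} (p : Fin d → F) : Vtx F d := Sum.inl p

/-- A hyperplane as a vertex. -/
def vr {F : Type} [Field F] {d : ℕ} (π : Hyp F d) : Vtx F d := Sum.inr π

lemma sum_vtx (F : Type) [Field F] [Fintype F] (d : ℕ) (f : Vtx F d → ℝ) :
    ∑ v, f v = ∑ p : Fin d → F, f (vl p) + ∑ π : Hyp F d, f (vr π) := by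
  refine Eq.trans ?_ (Fintype.sum_sum_type (f := fun v : (Fin d → F) ⊕ Hyp F d => f v))
  refine Finset.sum_congr ?_ (fun _ _ => rfl)
  ext v
  constructor
  · intro _
    exact @Finset.mem_univ ((Fin d → F) ⊕ Hyp F d) _ v
  · intro _
    exact Finset.mem_univ _

instance dualFintypeInst (F : Type) [Field F] [Fintype F] (d : ℕ) :
    Fintype (Module.Dual F (Fin d → F)) := by
  have : Finite (Module.Dual F (Fin d → F)) := Module.finite_of_finite F
  exact Fintype.ofFinite _

lemma sum_submodule {F V : Type} [Field F] [Fintype F] [AddCommGroup V] [Module F V]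
    [Fintype V] (W : Submodule F V) :
    (∑ f : V, if f ∈ W then (1 : ℝ) else 0) = (Fintype.card F : ℝ) ^ Module.finrank F W := by
  rw [Finset.sum_boole]
  have h := Module.card_eq_pow_finrank (K := F) (V := W)
  rw [← Nat.cast_pow, ← h, Fintype.card_subtype]

lemma sum_submodule_ne {F V : Type} [Field F] [Fintype F] [AddCommGroup V] [Module F V]
    [Fintype V] (W : Submodule F V) :
    (∑ f : V, if f ≠ 0 ∧ f ∈ W then (1 : ℝ) else 0)
      = (Fintype.card F : ℝ) ^ Module.finrank F W - 1 := by
  rw [← sum_submodule W, eq_sub_iff_add_eq]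
  have h : (∑ f : V, if f = 0 then (1 : ℝ) else 0) = 1 := by simp
  rw [← h, ← Finset.sum_add_distrib]
  refine Finset.sum_congr rfl (fun f _ => ?_)
  by_cases h0 : f = 0
  · simp [h0]
  · simp [h0]

lemma ker_finrank {F : Type} [Field F] {d : ℕ} (f : Module.Dual F (Fin d → F)) (hf : f ≠ 0) :
    Module.finrank F (LinearMap.ker f) = d - 1 := by
  have h := Module.Dual.finrank_ker_add_one_of_ne_zero hf
  rw [Module.finrank_fin_fun] at h
  omega

lemma normals_of_sub {F : Type} [Field F] [Fintype F] {d : ℕ} (hd : 2 ≤ d)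
    (W : Submodule F (Fin d → F)) (hW : Module.finrank F W = d - 1) :
    (∑ f : Module.Dual F (Fin d → F),
      if f ≠ 0 ∧ f ∈ W.dualAnnihilator then (1 : ℝ) else 0)
      = (Fintype.card F : ℝ) - 1 := by
  have h := Subspace.finrank_add_finrank_dualAnnihilator_eq W
  rw [hW, Module.finrank_fin_fun] at h
  have h1 : Module.finrank F W.dualAnnihilator = 1 := by omega
  have h2 := sum_submodule_ne W.dualAnnihilator
  rw [h1, pow_one] at h2
  convert h2

lemma normals_of_hyp {F : Type} [Field F] [Fintype F] {d : ℕ} (hd : 2 ≤ d) (π : Hyp F d) :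
    (∑ f : Module.Dual F (Fin d → F),
      if f ≠ 0 ∧ f ∈ π.1.direction.dualAnnihilator then (1 : ℝ) else 0)
      = (Fintype.card F : ℝ) - 1 :=
  normals_of_sub hd π.1.direction π.2.2

lemma hyps_of_normal {F : Type} [Field F] [Fintype F] {d : ℕ}
    (p p' : Fin d → F) (f : Module.Dual F (Fin d → F)) :
    (∑ π : Hyp F d, if (p ∈ π.1 ∧ p' ∈ π.1) ∧ f ≠ 0 ∧ f ∈ π.1.direction.dualAnnihilator
        then (1 : ℝ) else 0)
      = if f ≠ 0 ∧ f (p' - p) = 0 then 1 else 0 := by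
  by_cases hf : f = 0
  · simp [hf]
  have key : ∀ π : Hyp F d, p ∈ π.1 → f ∈ π.1.direction.dualAnnihilator →
      π.1 = AffineSubspace.mk' p (LinearMap.ker f) := by
    intro π hp hfa
    have hle : π.1.direction ≤ LinearMap.ker f := by
      intro x hx
      exact (Submodule.mem_dualAnnihilator f).1 hfa x hx
    have heq : π.1.direction = LinearMap.ker f :=
      Submodule.eq_of_le_of_finrank_eq hle (by rw [π.2.2, ker_finrank f hf])
    rw [← heq, AffineSubspace.mk'_eq hp]
  by_cases h : f (p' - p) = 0
  · let π0 : Hyp F d := ⟨AffineSubspace.mk' p (LinearMap.ker f),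
      ⟨p, AffineSubspace.self_mem_mk' _ _⟩, by
        rw [AffineSubspace.direction_mk', ker_finrank f hf]⟩
    rw [if_pos ⟨hf, h⟩]
    rw [Finset.sum_eq_single π0]
    · rw [if_pos]
      refine ⟨⟨AffineSubspace.self_mem_mk' _ _, ?_⟩, hf, ?_⟩
      · change p' ∈ AffineSubspace.mk' p (LinearMap.ker f)
        rw [AffineSubspace.mem_mk']
        simpa using h
      · change f ∈ (AffineSubspace.mk' p (LinearMap.ker f)).direction.dualAnnihilator
        rw [AffineSubspace.direction_mk', Submodule.mem_dualAnnihilator]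
        intro w hw
        exact hw
    · intro π _ hne
      rw [if_neg]
      rintro ⟨⟨hp, _⟩, _, hfa⟩
      exact hne (Subtype.ext (key π hp hfa))
    · intro h; exact absurd (Finset.mem_univ _) h
  · rw [if_neg (fun h' => h h'.2)]
    refine Finset.sum_eq_zero (fun π _ => ?_)
    rw [if_neg]
    rintro ⟨⟨hp, hp'⟩, _, hfa⟩
    exact h ((Submodule.mem_dualAnnihilator f).1 hfa _
      (AffineSubspace.vsub_mem_direction hp' hp))

lemma normals_of_vec {F : Type} [Field F] [Fintype F] {d : ℕ} (v : Fin d → F) :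
    (∑ f : Module.Dual F (Fin d → F), if f ≠ 0 ∧ f v = 0 then (1 : ℝ) else 0)
      = if v = 0 then (Fintype.card F : ℝ) ^ d - 1 else (Fintype.card F : ℝ) ^ (d - 1) - 1 := by
  have h := sum_submodule_ne (Submodule.dualAnnihilator (F ∙ v))
  have h2 := Subspace.finrank_add_finrank_dualAnnihilator_eq (F ∙ v)
  rw [Module.finrank_fin_fun] at h2
  have h3 : ∀ f : Module.Dual F (Fin d → F),
      f ∈ Submodule.dualAnnihilator (F ∙ v) ↔ f v = 0 := by
    intro f
    rw [Submodule.mem_dualAnnihilator]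
    constructor
    · intro h; exact h v (Submodule.mem_span_singleton_self v)
    · intro h w hw
      obtain ⟨c, rfl⟩ := Submodule.mem_span_singleton.1 hw
      simp [h]
  simp only [h3] at h
  rw [h]
  by_cases hv : v = 0
  · subst hv
    rw [if_pos rfl]
    have : Module.finrank F (F ∙ (0 : Fin d → F)) = 0 := by simp
    rw [this, zero_add] at h2
    rw [h2]
  · rw [if_neg hv]
    rw [finrank_span_singleton hv] at h2
    have : Module.finrank F (Submodule.dualAnnihilator (F ∙ v)) = d - 1 := by omega
    rw [this]

lemma count_two {F : Type} [Field F] [Fintype F] {d : ℕ} (hd : 2 ≤ d) (p p' : Fin d → F) :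
    ((Fintype.card F : ℝ) - 1) * (∑ π : Hyp F d, if p ∈ π.1 ∧ p' ∈ π.1 then (1 : ℝ) else 0)
      = if p' = p then (Fintype.card F : ℝ) ^ d - 1 else (Fintype.card F : ℝ) ^ (d - 1) - 1 := by
  have h := normals_of_vec (p' - p)
  simp only [sub_eq_zero (a := p')] at h
  rw [← h, Finset.mul_sum]
  simp_rw [← hyps_of_normal p p']
  rw [Finset.sum_comm]
  refine Finset.sum_congr rfl (fun π _ => ?_)
  by_cases hp : p ∈ π.1 ∧ p' ∈ π.1
  · simp only [hp, and_self, true_and, if_true, mul_one]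
    exact (normals_of_hyp hd π).symm
  · simp only [hp, false_and, if_false, Finset.sum_const_zero, mul_zero]

lemma card_hyp {F : Type} [Field F] [Fintype F] {d : ℕ} (π : Hyp F d) :
    (∑ p : Fin d → F, if p ∈ π.1 then (1 : ℝ) else 0) = (Fintype.card F : ℝ) ^ (d - 1) := by
  obtain ⟨p0, hp0⟩ := π.2.1
  rw [← π.2.2, ← sum_submodule]
  refine Fintype.sum_equiv (Equiv.subRight p0) _ _ (fun p => ?_)
  have : p ∈ π.1 ↔ p - p0 ∈ π.1.direction :=
    (AffineSubspace.vsub_right_mem_direction_iff_mem hp0 p).symm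
  simp only [Equiv.subRight_apply, this]

lemma adj_transpose (F : Type) [Field F] (d : ℕ) : (adjA F d).transpose = adjA F d := by
  ext u v
  rcases u with p | π <;> rcases v with p' | π' <;> rfl

lemma matB_transpose (F : Type) [Field F] (d : ℕ) : (matB F d).transpose = matB F d := by
  ext u v
  rcases u with p | π <;> rcases v with p' | π' <;> rfl

lemma adj_ll (F : Type) [Field F] (d : ℕ) (p p' : Fin d → F) :
    adjA F d (vl p) (vl p') = 0 := rfl
lemma adj_rr (F : Type) [Field F] (d : ℕ) (p p' : Hyp F d) :
    adjA F d (vr p) (vr p') = 0 := rfl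
lemma adj_lr (F : Type) [Field F] (d : ℕ) (p : Fin d → F) (π : Hyp F d) :
    adjA F d (vl p) (vr π) = if p ∈ π.1 then 1 else 0 := rfl
lemma adj_rl (F : Type) [Field F] (d : ℕ) (p : Fin d → F) (π : Hyp F d) :
    adjA F d (vr π) (vl p) = if p ∈ π.1 then 1 else 0 := rfl

lemma cube_lr (q d : ℕ) (hd : 2 ≤ d) (F : Type) [Field F] [Fintype F]
    (hF : Fintype.card F = q) (p : Fin d → F) (π : Hyp F d) :
    (adjA F d * adjA F d * adjA F d) (vl p) (vr π) =
      ((((q : ℝ) ^ d - 1) / ((q : ℝ) - 1) - 1) * (q : ℝ) ^ (d - 2)) +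
       (q : ℝ) ^ (d - 1) * (if p ∈ π.1 then 1 else 0) := by
  have hq1 : (1 : ℝ) < q := by
    rw [← hF]; exact_mod_cast Fintype.one_lt_card
  have hne : (q : ℝ) - 1 ≠ 0 := by linarith
  have hsq : ∀ p' : Fin d → F, (adjA F d * adjA F d) (vl p) (vl p')
      = ∑ π : Hyp F d, if p ∈ π.1 ∧ p' ∈ π.1 then (1 : ℝ) else 0 := by
    intro p'
    rw [Matrix.mul_apply, sum_vtx]
    simp only [adj_ll, adj_lr, adj_rl, mul_zero, Finset.sum_const_zero, zero_add]
    refine Finset.sum_congr rfl (fun π _ => ?_)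
    by_cases h1 : p ∈ π.1 <;> by_cases h2 : p' ∈ π.1 <;> simp [h1, h2]
  rw [Matrix.mul_apply, sum_vtx]
  simp only [adj_rr, adj_lr, mul_zero, Finset.sum_const_zero, add_zero, hsq]
  apply mul_left_cancel₀ hne
  rw [Finset.mul_sum]
  have hc := count_two hd p
  have hcard := card_hyp π
  rw [hF] at hc hcard
  simp_rw [← mul_assoc, hc]
  have hsplit : ∀ p' : Fin d → F,
      (if p' = p then (q : ℝ) ^ d - 1 else (q : ℝ) ^ (d - 1) - 1) * (if p' ∈ π.1 then 1 else 0)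
      = ((q : ℝ) ^ (d - 1) - 1) * (if p' ∈ π.1 then 1 else 0)
        + (if p' = p then ((q : ℝ) ^ d - (q : ℝ) ^ (d - 1)) * (if p ∈ π.1 then 1 else 0) else 0) := by
    intro p'
    by_cases h : p' = p
    · subst h
      simp only [if_true]
      ring
    · simp only [h, if_false, add_zero]
  simp_rw [hsplit]
  rw [Finset.sum_add_distrib, ← Finset.mul_sum, hcard, Finset.sum_ite_eq' Finset.univ p,
    if_pos (Finset.mem_univ p)]
  obtain ⟨n, rfl⟩ := Nat.exists_eq_add_of_le' hd
  have e1 : n + 2 - 1 = n + 1 := rfl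
  have e2 : n + 2 - 2 = n := rfl
  rw [e1, e2]
  field_simp
  ring

lemma cube_diag (d : ℕ) (F : Type) [Field F] [Fintype F] :
    (∀ p p' : Fin d → F, (adjA F d * adjA F d * adjA F d) (vl p) (vl p') = 0) ∧
    (∀ π π' : Hyp F d, (adjA F d * adjA F d * adjA F d) (vr π) (vr π') = 0) := by
  have h1 : ∀ (p : Fin d → F) (π : Hyp F d),
      (adjA F d * adjA F d) (vl p) (vr π) = 0 := by
    intro p π
    rw [Matrix.mul_apply, sum_vtx]
    simp [adj_ll, adj_rr]
  have h2 : ∀ (p : Fin d → F) (π : Hyp F d),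
      (adjA F d * adjA F d) (vr π) (vl p) = 0 := by
    intro p π
    rw [Matrix.mul_apply, sum_vtx]
    simp [adj_ll, adj_rr]
  constructor
  · intro p p'
    rw [Matrix.mul_apply, sum_vtx]
    simp [adj_ll, h1]
  · intro π π'
    rw [Matrix.mul_apply, sum_vtx]
    simp [adj_rr, h2]

/-- `A³ = ((q^d−1)/(q−1) − 1)·q^{d−2}·B + q^{d−1}·A`. -/
theorem adjacency_cube_identity (q d : ℕ) (hq : IsPrimePow q) (hd : 2 ≤ d)
    (F : Type) [Field F] [Fintype F] (hF : Fintype.card F = q) :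
    adjA F d * adjA F d * adjA F d =
      ((((q : ℝ) ^ d - 1) / ((q : ℝ) - 1) - 1) * (q : ℝ) ^ (d - 2)) • matB F d
        + (q : ℝ) ^ (d - 1) • adjA F d := by
  have hlr := cube_lr q d hd F hF
  have hT : (adjA F d * adjA F d * adjA F d).transpose = adjA F d * adjA F d * adjA F d := by
    rw [Matrix.transpose_mul, Matrix.transpose_mul, adj_transpose, Matrix.mul_assoc]
  ext u v
  rw [Matrix.add_apply, Matrix.smul_apply, Matrix.smul_apply, smul_eq_mul, smul_eq_mul]
  have hu : (∃ p, u = vl p) ∨ (∃ π, u = vr π) := by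
    rcases u with p | π
    · exact Or.inl ⟨p, rfl⟩
    · exact Or.inr ⟨π, rfl⟩
  have hv : (∃ p, v = vl p) ∨ (∃ π, v = vr π) := by
    rcases v with p | π
    · exact Or.inl ⟨p, rfl⟩
    · exact Or.inr ⟨π, rfl⟩
  rcases hu with ⟨p, rfl⟩ | ⟨π, rfl⟩ <;> rcases hv with ⟨p', rfl⟩ | ⟨π', rfl⟩
  · rw [(cube_diag d F).1, adj_ll]
    change 0 = _ * 0 + _
    simp
  · rw [hlr, adj_lr]
    change _ = _ * 1 + _
    rw [mul_one]
  · rw [← hT, Matrix.transpose_apply, hlr, adj_rl]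
    change _ = _ * 1 + _
    rw [mul_one]
  · rw [(cube_diag d F).2, adj_rr]
    change 0 = _ * 0 + _
    simp

end
end

section
/- There exist an absolute constant c > 0 and a threshold Q such that for every prime power q ≥ Q there is a collection 𝒞 of subsets (containers) of 𝔽_q² satisfying: (i) every general position subset of 𝔽_q² is contained in some member of 𝒞; (ii) |C| ≤ 9q for every C ∈ 𝒞; and (iii) |𝒞| ≤ 2^{c · q^{1/2} · (log q)²}, where log is base 2. -/
/-- A set `P ⊆ 𝔽_q^d` is in general position if every `(d+1)`-element subset of `P`
is affinely independent (equivalently, no `d+1` points of `P` lie in a common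
hyperplane). -/
def IsGenPos (F : Type*) [Field F] (d : ℕ) (P : Set (Fin d → F)) : Prop :=
  ∀ s : Finset (Fin d → F), (↑s : Set (Fin d → F)) ⊆ P → s.card = d + 1 →
    AffineIndependent F ((↑) : s → (Fin d → F))

open Classical in
/-- Kleitman–Winston type lemma. -/
theorem kw_aux {V : Type*} [Fintype V] (R : V → V → Prop) (A₀ : Finset V) (m β : ℝ)
    (hβ1 : β ≤ 1)
    (H : ∀ A : Finset V, A ⊆ A₀ → m < (A.card : ℝ) →
      ∃ v ∈ A, β * (A.card : ℝ) ≤ ((A.filter (fun w => w ≠ v ∧ R v w)).card : ℝ)) :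
    ∀ (n t : ℕ) (A : Finset V), A.card ≤ n → A ⊆ A₀ → (A.card : ℝ) * (1 - β) ^ t ≤ m →
      ∃ 𝓕 : Finset (Finset V),
        (∀ I : Finset V, I ⊆ A → (∀ x ∈ I, ∀ y ∈ I, x ≠ y → ¬ R x y) → ∃ C ∈ 𝓕, I ⊆ C) ∧
        (∀ C ∈ 𝓕, (C.card : ℝ) ≤ m + t) ∧ 𝓕.card ≤ (n + 1) ^ t := by
  intro n
  induction n with
  | zero =>
    intro t A hA hA0 hm
    have hA' : A = ∅ := Finset.card_eq_zero.mp (Nat.le_zero.mp hA)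
    subst hA'
    refine ⟨{∅}, ?_, ?_, by simp⟩
    · intro I hI _
      exact ⟨∅, by simp, hI⟩
    · intro C hC
      simp only [Finset.mem_singleton] at hC
      subst hC
      simp at hm ⊢
      positivity
  | succ n ih =>
    intro t A hA hA0 hm
    by_cases hs : (A.card : ℝ) ≤ m
    · refine ⟨{A}, ?_, ?_, ?_⟩
      · intro I hI _
        exact ⟨A, by simp, hI⟩
      · intro C hC
        simp only [Finset.mem_singleton] at hC
        subst hC
        have : (0 : ℝ) ≤ t := Nat.cast_nonneg t
        linarith
      · simp only [Finset.card_singleton]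
        exact Nat.one_le_pow _ _ (by omega)
    · push Not at hs
      obtain ⟨v, hvA, hv⟩ := H A hA0 hs
      cases t with
      | zero => simp at hm; linarith
      | succ t =>
        have hb : 0 ≤ 1 - β := by linarith
        have hce : (A.erase v).card + 1 = A.card := Finset.card_erase_add_one hvA
        obtain ⟨F1, h1c, h1s, h1n⟩ := ih (t + 1) (A.erase v) (by omega)
          ((Finset.erase_subset _ _).trans hA0) (by
            refine le_trans ?_ hm
            have : ((A.erase v).card : ℝ) ≤ A.card := by exact_mod_cast (by omega)
            gcongr)
        set B := (A.erase v).filter (fun w => ¬ R v w) with hB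
        have hBA : B ⊆ A.erase v := Finset.filter_subset _ _
        have hBc : (B.card : ℝ) ≤ (1 - β) * A.card := by
          have hd : Disjoint B (A.filter (fun w => w ≠ v ∧ R v w)) := by
            rw [Finset.disjoint_left]
            intro x hx hx'
            simp [hB] at hx hx'
            tauto
          have hsub : B ∪ (A.filter (fun w => w ≠ v ∧ R v w)) ⊆ A := by
            intro x hx
            simp [hB] at hx
            tauto
          have := Finset.card_le_card hsub
          rw [Finset.card_union_of_disjoint hd] at this
          have : (B.card : ℝ) + ((A.filter (fun w => w ≠ v ∧ R v w)).card : ℝ) ≤ A.card := by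
            exact_mod_cast this
          linarith
        obtain ⟨F2, h2c, h2s, h2n⟩ := ih t B
          (by have := Finset.card_le_card hBA; omega)
          (hBA.trans ((Finset.erase_subset _ _).trans hA0)) (by
            refine le_trans ?_ hm
            calc (B.card : ℝ) * (1 - β) ^ t ≤ ((1 - β) * A.card) * (1 - β) ^ t := by gcongr
              _ = _ := by ring)
        refine ⟨F1 ∪ F2.image (fun C => insert v C), ?_, ?_, ?_⟩
        · intro I hI hind
          by_cases hvI : v ∈ I
          · obtain ⟨C, hC, hIC⟩ := h2c (I.erase v) (by
              intro x hx
              have hx' := Finset.mem_erase.mp hx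
              simp only [hB, Finset.mem_filter, Finset.mem_erase]
              exact ⟨⟨hx'.1, hI hx'.2⟩, hind v hvI x hx'.2 hx'.1.symm⟩)
              (fun x hx y hy => hind x (Finset.mem_of_mem_erase hx) y (Finset.mem_of_mem_erase hy))
            refine ⟨insert v C, Finset.mem_union_right _ (Finset.mem_image_of_mem _ hC), ?_⟩
            intro x hx
            by_cases hxv : x = v
            · simp [hxv]
            · exact Finset.mem_insert_of_mem (hIC (Finset.mem_erase.mpr ⟨hxv, hx⟩))
          · obtain ⟨C, hC, hIC⟩ := h1c I (Finset.subset_erase.mpr ⟨hI, hvI⟩) hind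
            exact ⟨C, Finset.mem_union_left _ hC, hIC⟩
        · intro C hC
          rcases Finset.mem_union.mp hC with hC | hC
          · exact h1s C hC
          · obtain ⟨D, hD, rfl⟩ := Finset.mem_image.mp hC
            have h1 := h2s D hD
            have h2 : ((insert v D).card : ℝ) ≤ D.card + 1 := by
              exact_mod_cast Finset.card_insert_le v D
            push_cast
            linarith
        · have h3 : (F2.image (fun C => insert v C)).card ≤ F2.card := Finset.card_image_le
          have h4 := Finset.card_union_le F1 (F2.image (fun C => insert v C))
          calc _ ≤ (n + 1) ^ (t + 1) + (n + 1) ^ t := by omega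
            _ = (n + 1) ^ t * (n + 1 + 1) := by ring
            _ ≤ (n + 1 + 1) ^ t * (n + 1 + 1) := by gcongr; omega
            _ = _ := by ring

/-- Collinearity determinant. -/
def Col {F : Type*} [Field F] (a b c : Fin 2 → F) : Prop :=
  (b 0 - a 0) * (c 1 - a 1) = (b 1 - a 1) * (c 0 - a 0)

theorem genPos_not_col {F : Type*} [Field F] {P : Set (Fin 2 → F)} (hP : IsGenPos F 2 P)
    {a b c : Fin 2 → F} (ha : a ∈ P) (hb : b ∈ P) (hc : c ∈ P) (hab : a ≠ b) (hac : a ≠ c)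
    (hbc : b ≠ c) : ¬ Col a b c := by
  classical
  intro h
  have h1 := hP {a, b, c} (by
    intro x hx
    simp at hx
    rcases hx with rfl | rfl | rfl <;> assumption) (by
    rw [Finset.card_eq_three]; exact ⟨a, b, c, hab, hac, hbc, rfl⟩)
  have h2 : Collinear F (Set.range (Subtype.val : ({a, b, c} : Finset (Fin 2 → F)) → _)) := by
    rw [collinear_iff_of_mem (p₀ := a) (by simp)]
    refine ⟨b - a, ?_⟩
    intro p hp
    simp at hp
    rcases hp with rfl | rfl | rfl
    · exact ⟨0, by simp⟩
    · exact ⟨1, by simp⟩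
    · unfold Col at h
      by_cases h0 : b 0 - a 0 = 0
      · have h10 : b 1 - a 1 ≠ 0 := by
          intro h10
          apply hab
          funext i
          fin_cases i
          · exact (sub_eq_zero.mp h0).symm
          · exact (sub_eq_zero.mp h10).symm
        refine ⟨(p 1 - a 1) / (b 1 - a 1), ?_⟩
        funext i
        fin_cases i
        · simp [h0] at h ⊢
          rcases h with h | h
          · exact absurd h h10
          · exact sub_eq_zero.mp h
        · simp
          field_simp
          ring
      · refine ⟨(p 0 - a 0) / (b 0 - a 0), ?_⟩
        funext i
        fin_cases i
        · simp
          field_simp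
          ring
        · simp
          field_simp
          linear_combination h
  have h3 : AffineIndependent F ![a, b, c] := by
    have := h1.comp_embedding (ι2 := Fin 3)
      ⟨![⟨a, by simp⟩, ⟨b, by simp⟩, ⟨c, by simp⟩], by
        intro i j hij
        fin_cases i <;> fin_cases j <;> simp_all⟩
    convert this using 1
    funext i
    fin_cases i <;> rfl
  rw [affineIndependent_iff_not_collinear_set] at h3
  apply h3
  convert h2 using 1
  ext x
  simp

open Classical in
/-- Slope of a vector. -/
noncomputable def slopeOpt {F : Type*} [Field F] (v : Fin 2 → F) : Option F :=
  if v 0 = 0 then none else some (v 1 / v 0)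

theorem slopeOpt_eq_iff {F : Type*} [Field F] (s x y : Fin 2 → F)
    (h : slopeOpt (x - s) = slopeOpt (y - s)) : Col s x y := by
  unfold slopeOpt at h
  unfold Col
  simp only [Pi.sub_apply] at h
  split_ifs at h with h1 h2
  · rw [h1, h2]; ring
  · simp only [Option.some.injEq] at h
    field_simp at h
    linear_combination -h

theorem col_trans {F : Type*} [Field F] {s s' x y : Fin 2 → F} (hxy : x ≠ y)
    (h1 : Col s x y) (h2 : Col s' x y) : Col s s' x := by
  unfold Col at *
  by_cases h0 : y 0 - x 0 = 0
  · have h10 : y 1 - x 1 ≠ 0 := by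
      intro h10
      apply hxy
      funext i
      fin_cases i
      · exact (sub_eq_zero.mp h0).symm
      · exact (sub_eq_zero.mp h10).symm
    apply mul_left_cancel₀ h10
    have : y 0 = x 0 := sub_eq_zero.mp h0
    rw [this] at h1 h2
    linear_combination (x 1 - s' 1) * h1 - (x 1 - s 1) * h2
  · apply mul_left_cancel₀ h0
    linear_combination (x 0 - s' 0) * h1 - (x 0 - s 0) * h2

open Classical in
theorem degree_lemma {F : Type*} [Field F] [Fintype F] (q : ℕ) (hq : Fintype.card F = q)
    (S A : Finset (Fin 2 → F))
    (hA : ∀ x ∈ A, ∀ s ∈ S, ∀ s' ∈ S, s ≠ s' → ¬ Col s s' x)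
    (hc : 8 * (q : ℝ) < A.card) :
    ∃ v ∈ A, ((S.card : ℝ) / (2 * q)) * (A.card : ℝ) ≤
      ((A.filter (fun w => w ≠ v ∧
        ∃ s ∈ S, slopeOpt (v - s) = slopeOpt (w - s))).card : ℝ) := by
  have hq2 : 2 ≤ q := by rw [← hq]; exact Fintype.one_lt_card
  have hq2' : (2 : ℝ) ≤ q := by exact_mod_cast hq2
  -- per-s count
  have hper : ∀ s ∈ S, (A.card : ℝ) ^ 2 / (2 * q) ≤
      ∑ v ∈ A, ((A.filter (fun w => w ≠ v ∧ slopeOpt (v - s) = slopeOpt (w - s))).card : ℝ) := by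
    intro s _
    set n : Option F → ℝ := fun l => ((A.filter (fun w => slopeOpt (w - s) = l)).card : ℝ) with hn
    have hsum : ∑ l, n l = A.card := by
      have := Finset.card_eq_sum_card_fiberwise (s := A) (t := Finset.univ)
        (f := fun w => slopeOpt (w - s)) (by intro x _; simp)
      rw [this]; push_cast; rfl
    have hcs : (A.card : ℝ) ^ 2 ≤ (q + 1) * ∑ l, n l ^ 2 := by
      have := sq_sum_le_card_mul_sum_sq (s := (Finset.univ : Finset (Option F))) (f := n)
      rw [hsum] at this
      simpa [hq] using this
    have hsq : ∑ v ∈ A, n (slopeOpt (v - s)) = ∑ l, n l ^ 2 := by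
      rw [← Finset.sum_fiberwise_of_maps_to (s := A) (t := Finset.univ)
        (g := fun w => slopeOpt (w - s)) (by intro x _; simp)]
      apply Finset.sum_congr rfl
      intro l _
      rw [Finset.sum_congr rfl (g := fun _ => n l)]
      · simp only [Finset.sum_const, nsmul_eq_mul, sq]; rfl
      · intro x hx
        rw [(Finset.mem_filter.mp hx).2]
    have hv : ∀ v ∈ A, ((A.filter (fun w => w ≠ v ∧ slopeOpt (v - s) = slopeOpt (w - s))).card : ℝ)
        = n (slopeOpt (v - s)) - 1 := by
      intro v hvA
      have : A.filter (fun w => w ≠ v ∧ slopeOpt (v - s) = slopeOpt (w - s)) =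
          (A.filter (fun w => slopeOpt (w - s) = slopeOpt (v - s))).erase v := by
        ext w
        simp only [Finset.mem_filter, Finset.mem_erase]
        constructor
        · rintro ⟨h1, h2, h3⟩; exact ⟨h2, h1, h3.symm⟩
        · rintro ⟨h1, h2, h3⟩; exact ⟨h2, h1, h3.symm⟩
      rw [this, eq_sub_iff_add_eq]
      simp only [hn]
      have hmem : v ∈ A.filter (fun w => slopeOpt (w - s) = slopeOpt (v - s)) :=
        Finset.mem_filter.mpr ⟨hvA, rfl⟩
      exact_mod_cast Finset.card_erase_add_one hmem
    rw [Finset.sum_congr rfl hv, Finset.sum_sub_distrib, hsq]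
    simp only [Finset.sum_const, nsmul_eq_mul, mul_one]
    set a : ℝ := (A.card : ℝ)
    set X := ∑ l, n l ^ 2
    have hX : a ^ 2 / (q + 1) ≤ X := by
      rw [div_le_iff₀ (by linarith)]; linarith
    have : a ^ 2 / (2 * q) + a ≤ a ^ 2 / (q + 1) := by
      rw [div_add' _ _ _ (by positivity), div_le_div_iff₀ (by positivity) (by positivity)]
      have ha : 0 ≤ a := by positivity
      have h1 : 2 * (q : ℝ) * (q + 1) ≤ a * (q - 1) := by nlinarith
      nlinarith
    linarith
  -- total
  have htot : ∀ v ∈ A, ((A.filter (fun w => w ≠ v ∧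
        ∃ s ∈ S, slopeOpt (v - s) = slopeOpt (w - s))).card : ℝ) =
      ∑ s ∈ S, ((A.filter (fun w => w ≠ v ∧ slopeOpt (v - s) = slopeOpt (w - s))).card : ℝ) := by
    intro v hvA
    have : A.filter (fun w => w ≠ v ∧ ∃ s ∈ S, slopeOpt (v - s) = slopeOpt (w - s)) =
        S.biUnion (fun s => A.filter (fun w => w ≠ v ∧ slopeOpt (v - s) = slopeOpt (w - s))) := by
      ext w
      simp only [Finset.mem_filter, Finset.mem_biUnion]
      constructor
      · rintro ⟨h1, h2, s, hs, h3⟩; exact ⟨s, hs, h1, h2, h3⟩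
      · rintro ⟨s, hs, h1, h2, h3⟩; exact ⟨h1, h2, s, hs, h3⟩
    rw [this, Finset.card_biUnion]
    · push_cast; rfl
    · intro s hs s' hs' hss
      simp only [Finset.disjoint_left]
      intro w hw hw'
      have hw := (Finset.mem_filter.mp hw).2
      have hw' := (Finset.mem_filter.mp hw').2
      exact hA v hvA s hs s' hs' hss
        (col_trans hw.1.symm (slopeOpt_eq_iff _ _ _ hw.2) (slopeOpt_eq_iff _ _ _ hw'.2))
  have hne : A.Nonempty := by
    rw [← Finset.card_pos]
    have : (0 : ℝ) < A.card := by linarith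
    exact_mod_cast this
  apply Finset.exists_le_of_sum_le hne
  rw [Finset.sum_congr rfl htot, Finset.sum_comm]
  calc ∑ v ∈ A, ((S.card : ℝ) / (2 * q)) * (A.card : ℝ)
      = ∑ s ∈ S, (A.card : ℝ) ^ 2 / (2 * q) := by
        simp only [Finset.sum_const, nsmul_eq_mul]; ring
    _ ≤ _ := Finset.sum_le_sum hper

theorem numeric_threshold : ∃ Q : ℕ, ∀ q : ℕ, Q ≤ q →
    5 * Real.sqrt q * Real.logb 2 q ≤ q := by
  have h := isLittleO_log_rpow_atTop (r := 1 / 2) (by norm_num)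
  have h2 := (h.def (c := Real.log 2 / 5) (by have := Real.log_pos one_lt_two; positivity))
  have h3 := (tendsto_natCast_atTop_atTop (R := ℝ)).eventually h2
  obtain ⟨Q, hQ⟩ := Filter.eventually_atTop.mp h3
  refine ⟨max Q 1, fun q hq => ?_⟩
  have h4 := hQ q (le_trans (le_max_left _ _) hq)
  have hq1 : (1 : ℝ) ≤ q := by exact_mod_cast le_trans (le_max_right _ _) hq
  rw [← Real.sqrt_eq_rpow, Real.norm_of_nonneg (Real.log_nonneg hq1),
    Real.norm_of_nonneg (Real.sqrt_nonneg _)] at h4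
  have hl2 := Real.log_pos one_lt_two
  have h5 : Real.logb 2 q ≤ Real.sqrt q / 5 := by
    rw [Real.logb, div_le_iff₀ hl2]; linarith
  calc 5 * Real.sqrt q * Real.logb 2 q ≤ 5 * Real.sqrt q * (Real.sqrt q / 5) := by gcongr
    _ = Real.sqrt q * Real.sqrt q := by ring
    _ = q := Real.mul_self_sqrt (by positivity)

open Classical in
theorem containers_for_S {F : Type*} [Field F] [Fintype F] (q : ℕ) (hq : Fintype.card F = q)
    (S : Finset (Fin 2 → F)) (t : ℕ) (hS : S.card ≤ 2 * q)
    (ht : (q : ℝ) ^ 2 * (1 - (S.card : ℝ) / (2 * q)) ^ t ≤ 8 * q) :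
    ∃ 𝓕 : Finset (Finset (Fin 2 → F)), 𝓕.Nonempty ∧
      (∀ P : Set (Fin 2 → F), IsGenPos F 2 P → (S : Set (Fin 2 → F)) ⊆ P → ∃ C ∈ 𝓕, P ⊆ ↑C) ∧
      (∀ C ∈ 𝓕, S ⊆ C ∧ (C.card : ℝ) ≤ 8 * q + t + S.card) ∧ 𝓕.card ≤ (q ^ 2 + 1) ^ t := by
  have hq2 : 2 ≤ q := by rw [← hq]; exact Fintype.one_lt_card
  have hq2' : (2 : ℝ) ≤ q := by exact_mod_cast hq2
  set A : Finset (Fin 2 → F) :=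
    Finset.univ.filter (fun x => ∀ s ∈ S, ∀ s' ∈ S, s ≠ s' → ¬ Col s s' x) with hA
  have hAc : A.card ≤ q ^ 2 := by
    refine (Finset.card_le_univ _).trans ?_
    simp [hq]
  have hb : (S.card : ℝ) / (2 * q) ≤ 1 := by
    rw [div_le_one (by positivity)]; exact_mod_cast hS
  obtain ⟨G, hG1, hG2, hG3⟩ := kw_aux
    (fun v w => ∃ s ∈ S, slopeOpt (v - s) = slopeOpt (w - s)) A (8 * q) ((S.card : ℝ) / (2 * q))
    hb (by
      intro B hB hBc
      have := degree_lemma q hq S B (fun x hx => (Finset.mem_filter.mp (hB hx)).2) hBc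
      convert this)
    (q ^ 2) t A hAc (Finset.Subset.refl _) (by
      refine le_trans ?_ ht
      have : (0 : ℝ) ≤ 1 - (S.card : ℝ) / (2 * q) := by linarith
      have : (A.card : ℝ) ≤ (q : ℝ) ^ 2 := by exact_mod_cast hAc
      gcongr)
  refine ⟨G.image (fun C => S ∪ C), ?_, ?_, ?_, Finset.card_image_le.trans hG3⟩
  · obtain ⟨C, hC, _⟩ := hG1 ∅ (by simp) (by simp)
    exact ⟨_, Finset.mem_image_of_mem _ hC⟩
  · intro P hP hSP
    obtain ⟨C, hC, hI⟩ := hG1 (P.toFinset \ S) (by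
      intro x hx
      simp only [Finset.mem_sdiff, Set.mem_toFinset] at hx
      simp only [hA, Finset.mem_filter, Finset.mem_univ, true_and]
      intro s hs s' hs' hss
      exact genPos_not_col hP (hSP hs) (hSP hs') hx.1 hss
        (fun h => hx.2 (h ▸ hs)) (fun h => hx.2 (h ▸ hs'))) (by
      intro x hx y hy hxy
      simp only [Finset.mem_sdiff, Set.mem_toFinset] at hx hy
      rintro ⟨s, hs, h⟩
      exact genPos_not_col hP (hSP hs) hx.1 hy.1 (fun h => hx.2 (h ▸ hs))
        (fun h => hy.2 (h ▸ hs)) hxy (slopeOpt_eq_iff _ _ _ h))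
    refine ⟨_, Finset.mem_image_of_mem _ hC, ?_⟩
    intro x hx
    by_cases hxS : x ∈ S
    · simp [hxS]
    · have : x ∈ C := hI (by simp [hx, hxS])
      simp [this]
  · intro C hC
    obtain ⟨D, hD, rfl⟩ := Finset.mem_image.mp hC
    refine ⟨Finset.subset_union_left, ?_⟩
    have h1 := hG2 D hD
    have h2 : ((S ∪ D).card : ℝ) ≤ S.card + D.card := by exact_mod_cast Finset.card_union_le S D
    linarith

/-- The container theorem for general position sets in `𝔽_q²`. -/
theorem container_theorem_Fq2 :
    ∃ c : ℝ, 0 < c ∧ ∃ Q : ℕ, ∀ q : ℕ, Q ≤ q → IsPrimePow q →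
      ∀ (F : Type) [Field F] [Fintype F], Fintype.card F = q →
        ∃ 𝒞 : Finset (Finset (Fin 2 → F)),
          (∀ P : Set (Fin 2 → F), IsGenPos F 2 P → ∃ C ∈ 𝒞, P ⊆ ↑C) ∧
          (∀ C ∈ 𝒞, C.card ≤ 9 * q) ∧
          ((𝒞.card : ℝ) ≤ (2 : ℝ) ^ (c * Real.sqrt q * (Real.logb 2 q) ^ 2)) := by
  classical
  obtain ⟨Q, hQ⟩ := numeric_threshold
  refine ⟨13, by norm_num, max Q 2, ?_⟩
  intro q hqQ _ F _ _ hF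
  have hnum := hQ q (le_trans (le_max_left _ _) hqQ)
  have hq2 : 2 ≤ q := le_trans (le_max_right _ _) hqQ
  have hq2' : (2 : ℝ) ≤ q := by exact_mod_cast hq2
  set L := Real.logb 2 q with hL
  set r := Real.sqrt q with hr
  have hL1 : 1 ≤ L := by
    rw [hL, Real.le_logb_iff_rpow_le one_lt_two (by linarith)]
    simpa using hq2'
  have hr1 : 1 ≤ r := by
    rw [hr, Real.one_le_sqrt]; linarith
  have hrr : r * r = q := Real.mul_self_sqrt (by positivity)
  set k := Nat.sqrt q + 1 with hk
  have hkr : (k : ℝ) ≤ 2 * r := by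
    have : (Nat.sqrt q : ℝ) ≤ r := Real.nat_sqrt_le_real_sqrt
    push_cast [hk]; linarith
  have hkr' : r ≤ k := by
    have := Real.real_sqrt_le_nat_sqrt_succ (a := q)
    push_cast [hk]; exact this
  set t := ⌈2 * r * L⌉₊ with ht
  have hrL : 1 ≤ r * L := by nlinarith
  have ht1 : (t : ℝ) ≤ 3 * (r * L) := by
    have := (Nat.ceil_lt_add_one (a := 2 * r * L) (by nlinarith)).le
    linarith
  have ht2 : 2 * r * L ≤ t := Nat.le_ceil _
  have hk2 : k ≤ 2 * q := by
    have : (k : ℝ) ≤ 2 * q := by nlinarith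
    exact_mod_cast this
  have hlog : Real.log q ≤ L := by
    rw [hL, Real.logb, le_div_iff₀ (Real.log_pos one_lt_two)]
    have h1 : 0 ≤ Real.log q := Real.log_nonneg (by linarith)
    have h2 : Real.log 2 ≤ 1 := by
      have := Real.log_two_lt_d9; linarith
    nlinarith
  have hdecay : (q : ℝ) ^ 2 * (1 - (k : ℝ) / (2 * q)) ^ t ≤ 8 * q := by
    have hβ : (k : ℝ) / (2 * q) ≤ 1 := by
      rw [div_le_one (by positivity)]; exact_mod_cast hk2
    have h1 : (1 - (k : ℝ) / (2 * q)) ^ t ≤ 1 / q := by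
      calc (1 - (k : ℝ) / (2 * q)) ^ t ≤ (Real.exp (-((k : ℝ) / (2 * q)))) ^ t := by
            apply pow_le_pow_left₀ (by linarith)
            exact Real.one_sub_le_exp_neg _
        _ = Real.exp (-(t * ((k : ℝ) / (2 * q)))) := by rw [← Real.exp_nat_mul]; congr 1; ring
        _ ≤ Real.exp (-(Real.log q)) := by
            apply Real.exp_le_exp.mpr
            apply neg_le_neg
            refine hlog.trans ?_
            rw [mul_div_assoc', le_div_iff₀ (by positivity), ← hrr]
            calc L * (2 * (r * r)) = (2 * r * L) * r := by ring
              _ ≤ t * k := by gcongr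
        _ = 1 / q := by rw [Real.exp_neg, Real.exp_log (by linarith), one_div]
    calc (q : ℝ) ^ 2 * (1 - (k : ℝ) / (2 * q)) ^ t ≤ (q : ℝ) ^ 2 * (1 / q) := by gcongr
      _ = (q : ℝ) := by field_simp
      _ ≤ 8 * q := by linarith
  have hcard : Fintype.card (Fin 2 → F) = q ^ 2 := by simp [hF]
  have hkq : k ≤ q ^ 2 := by nlinarith
  have key : ∀ S : Finset (Fin 2 → F), ∃ 𝓕 : Finset (Finset (Fin 2 → F)), S.card = k →
      (𝓕.Nonempty ∧
      (∀ P : Set (Fin 2 → F), IsGenPos F 2 P → (S : Set (Fin 2 → F)) ⊆ P → ∃ C ∈ 𝓕, P ⊆ ↑C) ∧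
      (∀ C ∈ 𝓕, S ⊆ C ∧ (C.card : ℝ) ≤ 8 * q + t + k) ∧ 𝓕.card ≤ (q ^ 2 + 1) ^ t) := by
    intro S
    by_cases hS : S.card = k
    · obtain ⟨G, hG⟩ := containers_for_S q hF S t (by omega) (by rw [hS]; exact hdecay)
      rw [hS] at hG
      exact ⟨G, fun _ => hG⟩
    · exact ⟨∅, fun h => absurd h hS⟩
  choose f hf using key
  refine ⟨(Finset.powersetCard k Finset.univ).biUnion f, ?_, ?_, ?_⟩
  · intro P hP
    by_cases hPk : k ≤ P.toFinset.card
    · obtain ⟨S, hSP, hS⟩ := Finset.exists_subset_card_eq hPk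
      obtain ⟨C, hC, hPC⟩ := (hf S hS).2.1 P hP (by
        intro x hx; exact Set.mem_toFinset.mp (hSP hx))
      exact ⟨C, Finset.mem_biUnion.mpr ⟨S, by simp [Finset.mem_powersetCard, hS], hC⟩, hPC⟩
    · push Not at hPk
      obtain ⟨S, hPS, hS⟩ := Finset.exists_superset_card_eq hPk.le (by rw [hcard]; exact hkq)
      obtain ⟨C, hC⟩ := (hf S hS).1
      refine ⟨C, Finset.mem_biUnion.mpr ⟨S, by simp [Finset.mem_powersetCard, hS], hC⟩, ?_⟩
      intro x hx
      exact ((hf S hS).2.2.1 C hC).1 (hPS (Set.mem_toFinset.mpr hx))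
  · intro C hC
    obtain ⟨S, hS, hC⟩ := Finset.mem_biUnion.mp hC
    have hS := (Finset.mem_powersetCard.mp hS).2
    have h1 := ((hf S hS).2.2.1 C hC).2
    have h2 : (C.card : ℝ) ≤ 9 * q := by nlinarith
    exact_mod_cast h2
  · have h1 : ((Finset.powersetCard k (Finset.univ : Finset (Fin 2 → F))).biUnion f).card
        ≤ (q ^ 2) ^ k * (q ^ 2 + 1) ^ t := by
      refine (Finset.card_biUnion_le_card_mul _ _ ((q ^ 2 + 1) ^ t) ?_).trans ?_
      · intro S hS
        exact (hf S (Finset.mem_powersetCard.mp hS).2).2.2.2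
      · rw [Finset.card_powersetCard, Finset.card_univ, hcard]
        exact Nat.mul_le_mul_right _ (Nat.choose_le_pow _ _)
    have h2 : (q ^ 2) ^ k * (q ^ 2 + 1) ^ t ≤ q ^ (2 * k + 3 * t) := by
      rw [pow_add q (2 * k) (3 * t), pow_mul, pow_mul]
      have : q ^ 2 + 1 ≤ q ^ 3 := by nlinarith [sq_nonneg q, pow_succ q 2]
      gcongr
    have h3 : (q : ℝ) = 2 ^ L := (Real.rpow_logb (by norm_num) (by norm_num) (by linarith)).symm
    calc _ ≤ (q : ℝ) ^ (2 * k + 3 * t) := by exact_mod_cast h1.trans h2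
      _ = (2 : ℝ) ^ (L * ((2 * k + 3 * t : ℕ) : ℝ)) := by
          rw [Real.rpow_mul (by norm_num), ← h3, Real.rpow_natCast]
      _ ≤ _ := by
          apply Real.rpow_le_rpow_of_exponent_le (by norm_num)
          push_cast
          have : 2 * (k : ℝ) + 3 * t ≤ 13 * (r * L) := by nlinarith
          calc L * (2 * (k : ℝ) + 3 * t) ≤ L * (13 * (r * L)) := by gcongr
            _ = _ := by ring
end

section
/- For every integer d ≥ 2 there exists a constant c > 0 such that for every prime power q ≥ 2(d+1) and every point set P ⊆ 𝔽_q^d with |P| ≥ q + 2(d+1), the number of (d+1)-element subsets of P that are coplanar (i.e., affinely dependent) is at least c · min{|P|/q − 1, 1} · |P|^{d+1}/q. -/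
open Classical in
lemma ssc_mono_pairs {α β : Type*} [Fintype β] (A : Finset α) (φ : α → β) :
    A.card ^ 2 ≤ Fintype.card β * ((A.offDiag.filter (fun p => φ p.1 = φ p.2)).card + A.card) := by
  have h1 : A.card = ∑ b : β, (A.filter (fun x => φ x = b)).card :=
    Finset.card_eq_sum_card_fiberwise (fun x _ => Finset.mem_univ (φ x))
  have h2 : (∑ b : β, (A.filter (fun x => φ x = b)).card) ^ 2
      ≤ Fintype.card β * ∑ b : β, (A.filter (fun x => φ x = b)).card ^ 2 := by
    have := sq_sum_le_card_mul_sum_sq (s := (Finset.univ : Finset β))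
      (f := fun b => (A.filter (fun x => φ x = b)).card)
    simpa using this
  rw [← h1] at h2
  refine h2.trans (Nat.mul_le_mul_left _ ?_)
  have h3 : ((A ×ˢ A).filter (fun p => φ p.1 = φ p.2)).card
      = ∑ b : β, (A.filter (fun x => φ x = b)).card ^ 2 := by
    rw [Finset.card_eq_sum_card_fiberwise (f := fun p => φ p.1) (t := Finset.univ)
      (fun x _ => Finset.mem_univ _)]
    refine Finset.sum_congr rfl fun b _ => ?_
    rw [sq, ← Finset.card_product]
    congr 1
    ext ⟨x, y⟩
    simp only [Finset.mem_filter, Finset.mem_product]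
    constructor
    · rintro ⟨⟨⟨a, b⟩, c⟩, e⟩
      exact ⟨⟨a, e⟩, b, c ▸ e⟩
    · rintro ⟨⟨a, b⟩, c, e⟩
      exact ⟨⟨⟨a, c⟩, b.trans e.symm⟩, b⟩
  rw [← h3, ← Finset.diag_card A]
  refine le_trans (Finset.card_le_card ?_) (Finset.card_union_le _ _)
  intro ⟨x, y⟩
  simp only [Finset.mem_filter, Finset.mem_product, Finset.mem_union, Finset.mem_offDiag,
    Finset.mem_diag]
  tauto

lemma ssc_not_indep {d : ℕ} {F : Type} [Field F] (T : Finset (Fin d → F)) (hT : T.card = d + 1)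
    (h : Module.Dual F (Fin d → F)) (h0 : h ≠ 0) (p : Fin d → F)
    (hp : ∀ t ∈ T, h (t - p) = 0) :
    ¬ AffineIndependent F ((↑) : T → (Fin d → F)) := by
  intro hI
  have htop := hI.vectorSpan_eq_top_of_card_eq_finrank_add_one (by simp [hT])
  have hle : vectorSpan F (Set.range ((↑) : T → (Fin d → F))) ≤ LinearMap.ker h := by
    rw [vectorSpan_def, Submodule.span_le]
    rintro _ ⟨a, ⟨a', rfl⟩, b, ⟨b', rfl⟩, rfl⟩
    have ha := hp a' a'.2
    have hb := hp b' b'.2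
    simp only [map_sub] at ha hb
    simp only [SetLike.mem_coe, LinearMap.mem_ker, vsub_eq_sub, map_sub]
    rw [sub_eq_zero] at *
    rw [ha, hb]
  rw [htop, top_le_iff, LinearMap.ker_eq_top] at hle
  exact h0 hle

lemma ssc_color {d : ℕ} {F : Type} [Field F] [DecidableEq (Fin d → F)]
    (S : Finset (Fin d → F)) (hd : 2 ≤ d)
    (hS : S.card = d - 1) :
    ∃ φ : (Fin d → F) → Option F, ∀ x y, φ x = φ y →
      (insert x (insert y S)).card = d + 1 →
      ¬ AffineIndependent F
        ((↑) : (insert x (insert y S) : Finset (Fin d → F)) → (Fin d → F)) := by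
  classical
  obtain ⟨p, hp⟩ : S.Nonempty := by
    rw [← Finset.card_pos]; omega
  set G : Finset (Fin d → F) := (S.erase p).image (fun s => s - p) with hG
  set W : Submodule F (Fin d → F) := Submodule.span F (G : Set (Fin d → F)) with hW
  have hWr : Module.finrank F W ≤ d - 2 := by
    refine (finrank_span_finset_le_card G).trans (Finset.card_image_le.trans ?_)
    rw [Finset.card_erase_of_mem hp]; omega
  have hann := Subspace.finrank_add_finrank_dualAnnihilator_eq W
  rw [Module.finrank_fin_fun] at hann
  have hr : 1 < Module.finrank F W.dualAnnihilator := by omega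
  obtain ⟨f, hf⟩ : ∃ f : W.dualAnnihilator, f ≠ 0 := by
    have : Nontrivial W.dualAnnihilator := Module.nontrivial_of_finrank_pos (R := F) (by omega)
    exact exists_ne 0
  obtain ⟨g, hfg⟩ : ∃ g : W.dualAnnihilator, LinearIndependent F ![f, g] :=
    exists_linearIndependent_pair_of_one_lt_finrank (R := F) (M := W.dualAnnihilator) hr hf
  have hvan : ∀ k : W.dualAnnihilator, ∀ s ∈ S, (k : Module.Dual F (Fin d → F)) (s - p) = 0 := by
    intro k s hs
    by_cases hsp : s = p
    · simp [hsp]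
    · refine (Submodule.mem_dualAnnihilator _).1 k.2 _ (Submodule.subset_span ?_)
      simp only [hG, Finset.coe_image, Set.mem_image]
      exact ⟨s, by simp [hs, hsp], rfl⟩
  replace hfg := (LinearIndependent.pair_iff (R := F) (M := W.dualAnnihilator)).1 hfg
  have key : ∀ (k : W.dualAnnihilator) (x y : Fin d → F), k ≠ 0 →
      (k : Module.Dual F (Fin d → F)) (x - p) = 0 →
      (k : Module.Dual F (Fin d → F)) (y - p) = 0 →
      (insert x (insert y S)).card = d + 1 →
      ¬ AffineIndependent F
        ((↑) : (insert x (insert y S) : Finset (Fin d → F)) → (Fin d → F)) := by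
    intro k x y hk hx hy hc
    refine ssc_not_indep _ hc k (by simpa using hk) p ?_
    intro t ht
    rcases Finset.mem_insert.1 ht with rfl | ht
    · exact hx
    rcases Finset.mem_insert.1 ht with rfl | ht
    · exact hy
    exact hvan k t ht
  refine ⟨fun x => if (g : Module.Dual F (Fin d → F)) (x - p) = 0 then none else
    some ((f : Module.Dual F (Fin d → F)) (x - p) / (g : Module.Dual F (Fin d → F)) (x - p)), ?_⟩
  intro x y hxy hc
  by_cases hx : (g : Module.Dual F (Fin d → F)) (x - p) = 0
  · by_cases hy : (g : Module.Dual F (Fin d → F)) (y - p) = 0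
    · refine key g x y ?_ hx hy hc
      intro h0
      have := hfg 0 1 (by simp [h0])
      simp at this
    · simp only [if_pos hx, if_neg hy] at hxy
      cases hxy
  · by_cases hy : (g : Module.Dual F (Fin d → F)) (y - p) = 0
    · simp only [if_neg hx, if_pos hy] at hxy
      cases hxy
    · simp only [if_neg hx, if_neg hy, Option.some.injEq] at hxy
      set r := (f : Module.Dual F (Fin d → F)) (x - p) / (g : Module.Dual F (Fin d → F)) (x - p)
        with hr'
      refine key (f - r • g) x y ?_ ?_ ?_ hc
      · intro h0
        have := hfg 1 (-r) (by rw [one_smul, neg_smul, ← sub_eq_add_neg, h0])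
        simp at this
      · simp only [Submodule.coe_sub, Submodule.coe_smul, LinearMap.sub_apply,
          LinearMap.smul_apply, smul_eq_mul]
        rw [hr', div_mul_cancel₀ _ hx, sub_self]
      · simp only [Submodule.coe_sub, Submodule.coe_smul, LinearMap.sub_apply,
          LinearMap.smul_apply, smul_eq_mul]
        rw [hxy, div_mul_cancel₀ _ hy, sub_self]

open Classical in
lemma ssc_link {d : ℕ} {F : Type} [Field F] [Fintype F] (hd : 2 ≤ d)
    (P S : Finset (Fin d → F)) (hSP : S ⊆ P) (hS : S.card = d - 1) :
    (P.card - (d - 1)) ^ 2 ≤ (Fintype.card F + 1) *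
      (2 * (((P.powersetCard (d + 1)).filter
        (fun T : Finset (Fin d → F) => ¬ AffineIndependent F ((↑) : T → (Fin d → F)))).filter
          (fun T => S ⊆ T)).card + (P.card - (d - 1))) := by
  obtain ⟨φ, hφ⟩ := ssc_color S hd hS
  have h := ssc_mono_pairs (P \ S) φ
  rw [Fintype.card_option, Finset.card_sdiff_of_subset hSP, hS] at h
  refine h.trans (Nat.mul_le_mul_left _ (Nat.add_le_add_right ?_ _))
  refine Finset.card_le_mul_card_image_of_maps_to
    (f := fun p : (Fin d → F) × (Fin d → F) => insert p.1 (insert p.2 S)) ?_ 2 ?_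
  · rintro ⟨x, y⟩ hxy
    simp only [Finset.mem_filter, Finset.mem_offDiag, Finset.mem_sdiff] at hxy
    obtain ⟨⟨⟨hx, hxS⟩, ⟨hy, hyS⟩, hne⟩, hc⟩ := hxy
    have hcard : (insert x (insert y S)).card = d + 1 := by
      rw [Finset.card_insert_of_notMem (by simp [hne, hxS]), Finset.card_insert_of_notMem hyS, hS]
      omega
    simp only [Finset.mem_filter, Finset.mem_powersetCard]
    refine ⟨⟨⟨?_, hcard⟩, hφ x y hc hcard⟩, ?_⟩
    · intro z hz
      simp only [Finset.mem_insert] at hz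
      rcases hz with rfl | rfl | hz
      exacts [hx, hy, hSP hz]
    · intro z hz
      simp [hz]
  · intro T hT
    simp only [Finset.mem_filter, Finset.mem_powersetCard] at hT
    have hc : (T \ S).card = 2 := by
      rw [Finset.card_sdiff_of_subset hT.2, hT.1.1.2, hS]; omega
    have : (T \ S).offDiag.card = 2 := by rw [Finset.offDiag_card, hc]
    rw [← this]
    refine Finset.card_le_card ?_
    rintro ⟨x, y⟩ hxy
    simp only [Finset.mem_filter, Finset.mem_offDiag, Finset.mem_sdiff] at hxy ⊢
    obtain ⟨⟨⟨⟨hx, hxS⟩, ⟨hy, hyS⟩, hne⟩, hc⟩, rfl⟩ := hxy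
    simp [hxS, hyS, hne]

open Classical in
lemma ssc_double {α : Type*} (P : Finset α) (k d : ℕ) (𝒯 : Finset (Finset α))
    (h𝒯 : ∀ T ∈ 𝒯, T ⊆ P ∧ T.card = d) :
    ∑ S ∈ P.powersetCard k, (𝒯.filter (fun T => S ⊆ T)).card = 𝒯.card * d.choose k := by
  have := Finset.sum_card_bipartiteAbove_eq_sum_card_bipartiteBelow
    (s := P.powersetCard k) (t := 𝒯) (fun S T => S ⊆ T)
  simp only [Finset.bipartiteAbove, Finset.bipartiteBelow] at this
  rw [this, Finset.sum_const_nat]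
  intro T hT
  obtain ⟨h1, h2⟩ := h𝒯 T hT
  rw [← h2, ← Finset.card_powersetCard]
  congr 1
  ext S
  simp only [Finset.mem_filter, Finset.mem_powersetCard]
  constructor
  · rintro ⟨⟨a, b⟩, c⟩; exact ⟨c, b⟩
  · rintro ⟨a, b⟩; exact ⟨⟨a.trans h1, b⟩, a⟩

/-- Supersaturation for coplanar `(d+1)`-tuples in `𝔽_q^d`: if
`|P| ≥ q + 2(d+1)` then `P` contains at least `c·min{|P|/q − 1, 1}·|P|^{d+1}/q`
coplanar (affinely dependent) `(d+1)`-element subsets. -/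
theorem supersaturation_coplanar_tuples (d : ℕ) (hd : 2 ≤ d) :
    ∃ c : ℝ, 0 < c ∧ ∀ q : ℕ, IsPrimePow q → 2 * (d + 1) ≤ q →
      ∀ (F : Type) [Field F] [Fintype F], Fintype.card F = q →
        ∀ P : Finset (Fin d → F), q + 2 * (d + 1) ≤ P.card →
          c * min ((P.card : ℝ) / (q : ℝ) - 1) 1 * (P.card : ℝ) ^ (d + 1) / (q : ℝ)
            ≤ (({t : Finset (Fin d → F) | t ⊆ P ∧ t.card = d + 1 ∧
                  ¬ AffineIndependent F ((↑) : t → (Fin d → F))}).ncard : ℝ) := by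
  classical
  set K : ℝ := ((d + 1).choose (d - 1) : ℝ) with hK
  have hK0 : 0 < K := by
    rw [hK]; exact_mod_cast Nat.choose_pos (by omega)
  set D : ℝ := 2 ^ (d - 1) * ((d - 1).factorial : ℝ) with hD
  have hD0 : 0 < D := by
    have : (0 : ℝ) < ((d - 1).factorial : ℝ) := by exact_mod_cast Nat.factorial_pos _
    positivity
  refine ⟨1 / (32 * K * D), by positivity, ?_⟩
  intro q _ hq F _ _ hF P hP
  set 𝒯 : Finset (Finset (Fin d → F)) := (P.powersetCard (d + 1)).filter
        (fun T : Finset (Fin d → F) => ¬ AffineIndependent F ((↑) : T → (Fin d → F))) with h𝒯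
  have hset : {t : Finset (Fin d → F) | t ⊆ P ∧ t.card = d + 1 ∧
                  ¬ AffineIndependent F ((↑) : t → (Fin d → F))} = (𝒯 : Set _) := by
    ext t
    simp [h𝒯, Finset.mem_powersetCard, and_assoc]
  rw [hset, Set.ncard_coe_finset]
  have hdc : ∑ S ∈ P.powersetCard (d - 1), (𝒯.filter (fun T => S ⊆ T)).card
      = 𝒯.card * (d + 1).choose (d - 1) := by
    have h := ssc_double P (d - 1) (d + 1) 𝒯 (by
      intro T hT
      simp only [h𝒯, Finset.mem_filter, Finset.mem_powersetCard] at hT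
      exact hT.1)
    convert h
  set n : ℕ := P.card with hn
  have hqR : (2 * (d + 1) : ℝ) ≤ q := by exact_mod_cast hq
  have hPR : (q + 2 * (d + 1) : ℝ) ≤ n := by exact_mod_cast hP
  have hdR : (2 : ℝ) ≤ d := by exact_mod_cast hd
  have hq0 : (0 : ℝ) < q := by linarith
  have hn0 : (0 : ℝ) < n := by linarith
  set B : ℝ := (n : ℝ) * (n - q) / (16 * q) with hB
  have hB0 : 0 ≤ B := by
    have : (0 : ℝ) ≤ n - q := by linarith
    positivity
  have hlink : ∀ S ∈ P.powersetCard (d - 1), B ≤ ((𝒯.filter (fun T => S ⊆ T)).card : ℝ) := by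
    intro S hS
    rw [Finset.mem_powersetCard] at hS
    have h := ssc_link hd P S hS.1 hS.2
    rw [hF, ← h𝒯, ← hn] at h
    set X := (𝒯.filter (fun T => S ⊆ T)).card
    obtain ⟨m, hm⟩ : ∃ m, n - (d - 1) = m := ⟨_, rfl⟩
    rw [hm] at h
    have hmR : (m : ℝ) = n - d + 1 := by
      have : m + d = n + 1 := by omega
      have : (m : ℝ) + d = n + 1 := by exact_mod_cast this
      linarith
    have hR : (m : ℝ) ^ 2 ≤ (q + 1) * (2 * X + m) := by exact_mod_cast h
    have h1 : (n : ℝ) / 2 * ((n - q) / 2) ≤ m * (m - q - 1) := by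
      apply mul_le_mul <;> linarith
    have h2 : (m : ℝ) * (m - q - 1) ≤ 2 * (q + 1) * X := by nlinarith
    have h3 : 2 * ((q : ℝ) + 1) * X ≤ 4 * q * X := by
      have : (0 : ℝ) ≤ X := by positivity
      nlinarith
    rw [hB, div_le_iff₀ (by positivity)]
    linarith
  have hsum : (n.choose (d - 1) : ℝ) * B ≤ 𝒯.card * K := by
    have h1 := Finset.card_nsmul_le_sum (P.powersetCard (d - 1))
      (fun S => ((𝒯.filter (fun T => S ⊆ T)).card : ℝ)) B hlink
    rw [Finset.card_powersetCard, nsmul_eq_mul, ← Nat.cast_sum] at h1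
    have h2 := h1.trans_eq (congrArg Nat.cast (by convert hdc))
    rw [hK]
    exact_mod_cast h2
  have hch : (n : ℝ) ^ (d - 1) / D ≤ n.choose (d - 1) := by
    have h1 := Nat.pow_sub_le_descFactorial n (d - 1)
    rw [Nat.descFactorial_eq_factorial_mul_choose] at h1
    have h2 : n ^ (d - 1) ≤ 2 ^ (d - 1) * (n + 1 - (d - 1)) ^ (d - 1) := by
      rw [← mul_pow]
      exact Nat.pow_le_pow_left (by omega) _
    have h3 : n ^ (d - 1) ≤ 2 ^ (d - 1) * ((d - 1).factorial * n.choose (d - 1)) :=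
      h2.trans (Nat.mul_le_mul_left _ h1)
    rw [div_le_iff₀ hD0, hD]
    have h4 : (n : ℝ) ^ (d - 1) ≤ 2 ^ (d - 1) * ((d - 1).factorial * n.choose (d - 1)) := by
      exact_mod_cast h3
    linarith
  have hmin : min ((n : ℝ) / q - 1) 1 * n ≤ 2 * (n - q) := by
    by_cases h2 : (n : ℝ) ≤ 2 * q
    · have h3 : (n : ℝ) / q - 1 = (n - q) / q := by field_simp
      have h4 : (0 : ℝ) ≤ (n - q) / q := div_nonneg (by linarith) hq0.le
      calc min ((n : ℝ) / q - 1) 1 * n ≤ (n / q - 1) * n :=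
            mul_le_mul_of_nonneg_right (min_le_left _ _) hn0.le
        _ ≤ ((n - q) / q) * (2 * q) := by
            rw [h3]; exact mul_le_mul_of_nonneg_left h2 h4
        _ = 2 * (n - q) := by field_simp
    · calc min ((n : ℝ) / q - 1) 1 * n ≤ 1 * n :=
            mul_le_mul_of_nonneg_right (min_le_right _ _) hn0.le
        _ ≤ 2 * (n - q) := by linarith
  have hfin : (n : ℝ) ^ (d - 1) / D * B ≤ 𝒯.card * K :=
    (mul_le_mul_of_nonneg_right hch hB0).trans hsum
  have hpow : (n : ℝ) ^ (d + 1) = n ^ (d - 1) * n * n := by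
    rw [← pow_succ, ← pow_succ]; congr 1; omega
  calc 1 / (32 * K * D) * min ((n : ℝ) / q - 1) 1 * (n : ℝ) ^ (d + 1) / q
      = (min ((n : ℝ) / q - 1) 1 * n) * ((n : ℝ) ^ (d - 1) * n / (32 * K * D * q)) := by
        rw [hpow]; field_simp
    _ ≤ (2 * (n - q)) * ((n : ℝ) ^ (d - 1) * n / (32 * K * D * q)) :=
        mul_le_mul_of_nonneg_right hmin (by positivity)
    _ = ((n : ℝ) ^ (d - 1) / D * B) / K := by
        rw [hB]; field_simp; ring
    _ ≤ 𝒯.card := by rw [div_le_iff₀ hK0]; exact hfin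
end

section
/- For every integer d ≥ 2 there exists a constant c > 0 such that for every prime power q ≥ 2(d+1) and every point set P ⊆ 𝔽_q^d with |P| ≥ q + 2(d+1), the (d+1)-uniform hypergraph H on vertex set P whose edges are the coplanar (affinely dependent) (d+1)-element subsets of P is (c, τ)-bounded, where k = |P|/q and τ = (min{k − 1, 1})^{−d/(d+1)} · k^{−1} · q^{−1/(d+1)}. -/
/-- The edge set of the `(d+1)`-uniform hypergraph on vertex set `P ⊆ 𝔽_q^d` whose edges
are the coplanar (affinely dependent) `(d+1)`-element subsets of `P`. -/
def coplanarEdges (F : Type*) [Field F] (d : ℕ) (P : Finset (Fin d → F)) :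
    Set (Finset (Fin d → F)) :=
  {t | t ⊆ P ∧ t.card = d + 1 ∧ ¬ AffineIndependent F ((↑) : t → (Fin d → F))}

theorem dep_of_finrank {F : Type*} [Field F] {d : ℕ} (t : Finset (Fin d → F)) (ht : t.card = d + 1)
    (h : Module.finrank F (vectorSpan F (t : Set (Fin d → F))) < d) :
    ¬ AffineIndependent F ((↑) : t → (Fin d → F)) := by
  intro hi
  have := hi.finrank_vectorSpan (n := d) (by simpa using ht)
  have e : Set.range ((↑) : t → (Fin d → F)) = (t : Set (Fin d → F)) := by ext; simp
  rw [e] at this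
  omega

theorem dep_of_functional {F : Type*} [Field F] {d : ℕ} (t : Finset (Fin d → F))
    (ht : t.card = d + 1) (f : Module.Dual F (Fin d → F)) (hf : f ≠ 0) (c : F)
    (h : ∀ x ∈ t, f x = c) :
    ¬ AffineIndependent F ((↑) : t → (Fin d → F)) := by
  apply dep_of_finrank t ht
  have h1 : vectorSpan F (t : Set (Fin d → F)) ≤ LinearMap.ker f := by
    rw [vectorSpan_def, Submodule.span_le]
    rintro _ ⟨x, hx, y, hy, rfl⟩
    simp [h x hx, h y hy]
  have h2 : LinearMap.ker f < ⊤ := by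
    rw [lt_top_iff_ne_top]
    intro h
    exact hf (LinearMap.ker_eq_top.1 h)
  have h3 := Submodule.finrank_lt_finrank_of_lt (lt_of_le_of_lt h1 h2)
  simpa using h3

theorem finrank_span_le {F : Type*} [Field F] {d n : ℕ} (S : Finset (Fin d → F))
    (hS : S.card = n + 1) : Module.finrank F (vectorSpan F (S : Set (Fin d → F))) ≤ n := by
  have := finrank_vectorSpan_range_le F ((↑) : S → (Fin d → F)) (n := n) (by simpa using hS)
  have e : Set.range ((↑) : S → (Fin d → F)) = (S : Set (Fin d → F)) := by ext; simp
  rwa [e] at this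

theorem dep_of_span {F : Type*} [Field F] {d : ℕ} (hd : 1 ≤ d) (t S : Finset (Fin d → F))
    (ht : t.card = d + 1) (hS : S.card = d)
    (h : (t : Set (Fin d → F)) ⊆ affineSpan F (S : Set (Fin d → F))) :
    ¬ AffineIndependent F ((↑) : t → (Fin d → F)) := by
  apply dep_of_finrank t ht
  have h1 := finrank_span_le (n := d - 1) S (by omega)
  have h2 : vectorSpan F (t : Set (Fin d → F)) ≤ vectorSpan F (S : Set (Fin d → F)) := by
    rw [← direction_affineSpan, ← direction_affineSpan]
    exact AffineSubspace.direction_le (affineSpan_le.2 h)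
  have h3 := Submodule.finrank_mono h2
  omega

theorem pencil {F : Type*} [Field F] {d : ℕ} (hd : 2 ≤ d) (S : Finset (Fin d → F))
    (hS : S.card = d - 1) : ∃ cls : (Fin d → F) → Option F, ∀ x y, cls x = cls y →
      ∃ f : Module.Dual F (Fin d → F), f ≠ 0 ∧ ∃ c, (∀ s ∈ S, f s = c) ∧ f x = c ∧ f y = c := by
  classical
  have h1 := finrank_span_le (n := d - 2) S (by omega)
  obtain ⟨s0, hs0⟩ : S.Nonempty := Finset.card_pos.1 (by omega)
  set V := vectorSpan F (S : Set (Fin d → F)) with hV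
  have h2 : 1 < Module.finrank F V.dualAnnihilator := by
    have := Subspace.finrank_add_finrank_dualAnnihilator_eq V
    simp at this
    omega
  have hV' : ∀ f ∈ V.dualAnnihilator, ∀ s ∈ S, f s = f s0 := by
    intro f hf s hs
    have := (Submodule.mem_dualAnnihilator f).1 hf (s - s0)
      (vsub_mem_vectorSpan F (Finset.mem_coe.2 hs) (Finset.mem_coe.2 hs0))
    rw [map_sub] at this
    exact sub_eq_zero.1 this
  have : Nontrivial V.dualAnnihilator := Module.nontrivial_of_finrank_pos (R := F) (by omega)
  obtain ⟨f, hf⟩ := exists_ne (0 : V.dualAnnihilator)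
  obtain ⟨g, hg⟩ := exists_linearIndependent_pair_of_one_lt_finrank (R := F) (M := V.dualAnnihilator) h2 hf
  replace hg := LinearIndependent.pair_iff.1 hg
  let F1 : Module.Dual F (Fin d → F) := f
  let G1 : Module.Dual F (Fin d → F) := g
  have key : ∀ (a b : F), ¬ (a = 0 ∧ b = 0) → ∀ x y, a * (F1 x - F1 s0) + b * (G1 x - G1 s0) = 0 →
     a * (F1 y - F1 s0) + b * (G1 y - G1 s0) = 0 →
     ∃ f : Module.Dual F (Fin d → F), f ≠ 0 ∧ ∃ c, (∀ s ∈ S, f s = c) ∧ f x = c ∧ f y = c := by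
    intro a b hab x y hx hy
    refine ⟨((a • f + b • g : V.dualAnnihilator) : Module.Dual F (Fin d → F)), ?_, 
      a * F1 s0 + b * G1 s0, ?_, ?_, ?_⟩
    · intro h
      exact hab (hg a b (Subtype.ext h))
    · intro s hs
      have e1 := hV' _ f.2 s hs
      have e2 := hV' _ g.2 s hs
      simp [F1, G1, e1, e2]
    · simp [F1, G1] at hx ⊢
      linear_combination hx
    · simp [F1, G1] at hy ⊢
      linear_combination hy
  refine ⟨fun x => if F1 x - F1 s0 = 0 then none else some ((G1 x - G1 s0) / (F1 x - F1 s0)), ?_⟩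
  intro x y hxy
  dsimp only at hxy
  split_ifs at hxy with hx hy hy
  · exact key 1 0 (by simp) x y (by simp [hx]) (by simp [hy])
  · have h := Option.some.inj hxy
    refine key ((G1 x - G1 s0) / (F1 x - F1 s0)) (-1) (by simp) x y ?_ ?_
    · field_simp
      ring
    · rw [h]; field_simp
      ring

/-- a dependent set containing two distinct points -/
theorem exists_mem_span {F : Type*} [Field F] {d : ℕ} [DecidableEq (Fin d → F)]
    (t U : Finset (Fin d → F))
    (hU : U.card = 2) (hUt : U ⊆ t) (ht : ¬ AffineIndependent F ((↑) : t → (Fin d → F))) :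
    ∃ w ∈ t, w ∉ U ∧ w ∈ affineSpan F ((t.erase w : Finset (Fin d → F)) : Set (Fin d → F)) := by
  by_contra! hcon
  apply ht
  have key : ∀ A : Finset (Fin d → F), A ⊆ t \ U →
      AffineIndependent F ((↑) : ((A ∪ U : Finset (Fin d → F)) : Set (Fin d → F)) → (Fin d → F)) := by
    intro A
    induction A using Finset.induction_on with
    | empty =>
      intro _
      obtain ⟨a, b, hab, rfl⟩ := Finset.card_eq_two.1 hU
      have h1 := affineIndependent_of_ne F hab
      have h2 := h1.range
      convert! h2 using 2
      all_goals simp [Set.pair_comm]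
    | insert a A ha ih =>
      intro hA
      have hA' := Finset.insert_subset_iff.1 hA
      have ih' := ih hA'.2
      have hat := Finset.mem_sdiff.1 hA'.1
      have hna := hcon a hat.1 hat.2
      have hsub : A ∪ U ⊆ t.erase a := by
        intro z hz
        rw [Finset.mem_erase]
        rcases Finset.mem_union.1 hz with hz | hz
        · exact ⟨fun h => ha (h ▸ hz), (Finset.mem_sdiff.1 (hA'.2 hz)).1⟩
        · exact ⟨fun h => hat.2 (h ▸ hz), hUt hz⟩
      have hna' : a ∉ affineSpan F ((A ∪ U : Finset (Fin d → F)) : Set (Fin d → F)) :=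
        fun h => hna (affineSpan_mono F (Finset.coe_subset.2 hsub) h)
      have hmem : a ∈ ((insert a A ∪ U : Finset (Fin d → F)) : Set (Fin d → F)) := by simp
      refine AffineIndependent.affineIndependent_of_notMem_span (i := ⟨a, hmem⟩) ?_ ?_
      · let e : {y : ((insert a A ∪ U : Finset (Fin d → F)) : Set (Fin d → F)) // y ≠ ⟨a, hmem⟩} ↪
            ((A ∪ U : Finset (Fin d → F)) : Set (Fin d → F)) :=
          ⟨fun y => ⟨y.1.1, by
            have h1 := y.1.2
            have h2 : y.1.1 ≠ a := fun h => y.2 (Subtype.ext h)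
            simp only [Finset.coe_union, Finset.coe_insert, Set.mem_union, Set.mem_insert_iff] at h1 ⊢
            tauto⟩, fun y z h => by
              apply Subtype.ext; apply Subtype.ext
              simpa using h⟩
        exact ih'.comp_embedding e
      · intro h
        apply hna'
        refine affineSpan_mono F ?_ h
        rintro _ ⟨y, hy, rfl⟩
        have h1 := y.2
        have h2 : y.1 ≠ a := fun h => hy (Subtype.ext h)
        simp only [Finset.coe_union, Finset.coe_insert, Set.mem_union, Set.mem_insert_iff] at h1 ⊢
        tauto
  have := key (t \ U) le_rfl
  rw [Finset.sdiff_union_of_subset hUt] at this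
  exact this

theorem same_class_count {α β : Type*} [DecidableEq α] [Fintype β] [DecidableEq β]
    (A : Finset α) (cls : α → β) :
    A.card ^ 2 ≤ Fintype.card β * ((A.offDiag.filter (fun z => cls z.1 = cls z.2)).card + A.card) := by
  have h1 : A.card = ∑ b : β, (A.filter (fun x => cls x = b)).card :=
    Finset.card_eq_sum_card_fiberwise (by simp)
  have h2 : ((A ×ˢ A).filter (fun z => cls z.1 = cls z.2)).card
      = ∑ b : β, (A.filter (fun x => cls x = b)).card ^ 2 := by
    rw [Finset.card_eq_sum_card_fiberwise (f := fun z => cls z.1) (t := Finset.univ) (by simp)]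
    apply Finset.sum_congr rfl
    intro b _
    rw [sq, ← Finset.card_product]
    congr 1
    ext z
    simp only [Finset.mem_filter, Finset.mem_product]
    grind
  have h3 : ((A ×ˢ A).filter (fun z => cls z.1 = cls z.2)).card ≤
      (A.offDiag.filter (fun z => cls z.1 = cls z.2)).card + A.card := by
    rw [← Finset.diag_union_offDiag, Finset.filter_union, add_comm]
    refine (Finset.card_union_le _ _).trans ?_
    gcongr
    exact (Finset.card_filter_le _ _).trans (by simp)
  calc A.card ^ 2 = (∑ b : β, (A.filter (fun x => cls x = b)).card) ^ 2 := by rw [← h1]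
    _ ≤ Fintype.card β * ∑ b : β, (A.filter (fun x => cls x = b)).card ^ 2 := sq_sum_le_card_mul_sum_sq
    _ ≤ _ := by rw [← h2]; gcongr

theorem double_count {α : Type*} [DecidableEq α] (P : Finset α) (d D : ℕ) (hd : 2 ≤ d)
    (dep : Finset α → Prop) [DecidablePred dep]
    (h : ∀ S ∈ P.powersetCard (d - 1),
      D ≤ ((P \ S).offDiag.filter (fun z => dep (insert z.1 (insert z.2 S)))).card) :
    P.card.choose (d - 1) * D ≤
      (2 ^ (d + 1) * ((d + 1) * (d + 1))) * ((P.powersetCard (d + 1)).filter dep).card := by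
  let T := (P.powersetCard (d - 1)).sigma
    (fun S => ((P \ S).offDiag.filter (fun z => dep (insert z.1 (insert z.2 S)))))
  have h1 : P.card.choose (d - 1) * D ≤ T.card := by
    rw [Finset.card_sigma, ← Finset.card_powersetCard, ← smul_eq_mul]
    exact Finset.card_nsmul_le_sum _ _ _ h
  refine h1.trans ?_
  apply Finset.card_le_mul_card_image_of_maps_to (f := fun z => insert z.2.1 (insert z.2.2 z.1))
  · rintro ⟨S, x, y⟩ hz
    simp only [T, Finset.mem_sigma, Finset.mem_powersetCard, Finset.mem_filter, Finset.mem_offDiag,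
      Finset.mem_sdiff] at hz ⊢
    obtain ⟨⟨hS, hc⟩, ⟨hx, hy, hxy⟩, hdep⟩ := hz
    refine ⟨⟨?_, ?_⟩, hdep⟩
    · exact Finset.insert_subset hx.1 (Finset.insert_subset hy.1 hS)
    · rw [Finset.card_insert_of_notMem, Finset.card_insert_of_notMem hy.2, hc]
      · omega
      · simp [hxy, hx.2]
  · intro t ht
    have htc : t.card = d + 1 := (Finset.mem_powersetCard.1 (Finset.mem_filter.1 ht).1).2
    have : (T.filter (fun z => insert z.2.1 (insert z.2.2 z.1) = t)) ⊆
        t.powerset.sigma (fun _ => t ×ˢ t) := by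
      rintro ⟨S, x, y⟩ hz
      have := (Finset.mem_filter.1 hz).2
      simp only at this
      subst this
      simp only [Finset.mem_sigma, Finset.mem_powerset, Finset.mem_product]
      refine ⟨?_, by simp, by simp⟩
      intro a ha
      simp [ha]
    refine (Finset.card_le_card this).trans ?_
    simp [Finset.card_sigma, htc]

theorem pow_le_two_choose (r n : ℕ) (h : 2 * r ≤ n) : n ^ r ≤ 2 ^ r * r.factorial * n.choose r := by
  have h1 : (n + 1 - r) ^ r ≤ r.factorial * n.choose r := by
    rw [← Nat.descFactorial_eq_factorial_mul_choose]
    exact Nat.pow_sub_le_descFactorial n r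
  calc n ^ r ≤ (2 * (n + 1 - r)) ^ r := by gcongr; omega
    _ = 2 ^ r * (n + 1 - r) ^ r := mul_pow _ _ _
    _ ≤ 2 ^ r * (r.factorial * n.choose r) := by gcongr
    _ = _ := by ring

theorem pow_le_of_choose_le (r n h : ℕ) (hr : 1 ≤ h) (hc : n.choose r ≤ h) :
    n ^ r ≤ ((2 * r) ^ r + 2 ^ r * r.factorial) * h := by
  rcases le_total (2 * r) n with h1 | h1
  · have := pow_le_two_choose r n h1
    calc n ^ r ≤ 2 ^ r * r.factorial * n.choose r := this
      _ ≤ 2 ^ r * r.factorial * h := by gcongr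
      _ ≤ _ := by gcongr; omega
  · calc n ^ r ≤ (2 * r) ^ r := by gcongr
      _ ≤ (2 * r) ^ r + 2 ^ r * r.factorial := by omega
      _ ≤ _ := Nat.le_mul_of_pos_right _ hr

theorem pair_real (d q N D : ℕ) (hd : 2 ≤ d) (hq : 2 * (d + 1) ≤ q) (hN : q + 2 * (d + 1) ≤ N)
    (h : (N - (d - 1)) ^ 2 ≤ (q + 1) * (D + (N - (d - 1)))) (μ : ℝ) (_hμ0 : 0 < μ) (hμ1 : μ ≤ 1)
    (hμ : μ ≤ (N : ℝ) / q - 1) : μ * (N : ℝ) ^ 2 / q ≤ 16 * D := by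
  obtain ⟨e, rfl⟩ : ∃ e, d = e + 1 := ⟨d - 1, by omega⟩
  simp only [Nat.add_sub_cancel] at h
  obtain ⟨n, rfl⟩ : ∃ n, N = n + e := ⟨N - e, by omega⟩
  simp only [Nat.add_sub_cancel] at h
  have h' : (n : ℝ) ^ 2 ≤ (q + 1) * (D + n) := by exact_mod_cast h
  have hq' : 2 * ((e : ℝ) + 1 + 1) ≤ q := by exact_mod_cast hq
  have hN' : (q : ℝ) + 2 * ((e : ℝ) + 1 + 1) ≤ n + e := by exact_mod_cast hN
  have hq0 : (0 : ℝ) < q := by have : (0 : ℝ) ≤ e := by positivity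
                               linarith
  have he : (0 : ℝ) ≤ e := by positivity
  push_cast at hμ ⊢
  set M : ℝ := n + e with hM
  have hμ2 : μ * q ≤ M - q := by
    have : μ + 1 ≤ M / q := by linarith
    rw [le_div_iff₀ hq0] at this
    linarith
  have h5 : μ * M ≤ 2 * (M - q) := by nlinarith
  have h6 : M * (M - q) ≤ 8 * q * D := by
    have a1 : M ≤ 2 * n := by linarith
    have a2 : M - q ≤ 2 * (n - q - 1) := by linarith
    have a3 : (n : ℝ) * (n - q - 1) ≤ 2 * q * D := by
      have : (n : ℝ) * (n - q - 1) ≤ (q + 1) * D := by nlinarith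
      have hD : (0 : ℝ) ≤ D := by positivity
      nlinarith
    have : M * (M - q) ≤ (2 * n) * (2 * (n - q - 1)) := by
      apply mul_le_mul a1 a2 <;> linarith
    linarith
  rw [div_le_iff₀ hq0]
  have : 0 < M := by linarith
  nlinarith

theorem upper_gen {α : Type*} [DecidableEq α] (P U : Finset α) (H : Finset (Finset α)) (r i : ℕ)
    (hH : H ⊆ P.powersetCard r) (hU : U.card = i) :
    (H.filter (fun t => U ⊆ t)).card ≤ P.card ^ (r - i) := by
  have h1 : (H.filter (fun t => U ⊆ t)).card ≤ (P.powersetCard (r - i)).card := by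
    apply Finset.card_le_card_of_injOn (fun t => t \ U)
    · intro t ht
      obtain ⟨ht1, ht2⟩ := Finset.mem_filter.1 ht
      obtain ⟨ht3, ht4⟩ := Finset.mem_powersetCard.1 (hH ht1)
      refine Finset.mem_coe.2 (Finset.mem_powersetCard.2 ⟨Finset.sdiff_subset.trans ht3, ?_⟩)
      rw [Finset.card_sdiff_of_subset ht2, ht4, hU]
    · intro t ht s hs h
      have ht2 := (Finset.mem_filter.1 ht).2
      have hs2 := (Finset.mem_filter.1 hs).2
      simp only at h
      rw [← Finset.sdiff_union_of_subset ht2, h, Finset.sdiff_union_of_subset hs2]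
  refine h1.trans ?_
  rw [Finset.card_powersetCard]
  exact Nat.choose_le_pow _ _

theorem upper_two {F : Type*} [Field F] {d : ℕ} (hd : 2 ≤ d) [DecidableEq (Fin d → F)]
    (P U : Finset (Fin d → F)) (H : Finset (Finset (Fin d → F)))
    (hH : ∀ t, t ∈ H ↔ t ⊆ P ∧ t.card = d + 1 ∧ ¬ AffineIndependent F ((↑) : t → (Fin d → F)))
    (hU : U.card = 2) (hHne : 1 ≤ H.card) :
    ∃ L : ℕ, (H.filter (fun t => U ⊆ t)).card ≤ P.card ^ (d - 2) * L ∧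
      L ^ (d + 1) ≤ ((2 * (d + 1)) ^ (d + 1) + 2 ^ (d + 1) * (d + 1).factorial) * H.card := by
  classical
  let Ls : Finset (Fin d → F) → Finset (Fin d → F) := fun T =>
    P.filter (fun w => w ∈ affineSpan F ((T ∪ U : Finset (Fin d → F)) : Set (Fin d → F)))
  let TT := (P.powersetCard (d - 2)).filter (fun T => (T ∪ U).card = d)
  refine ⟨TT.sup (fun T => (Ls T).card), ?_, ?_⟩
  · have h1 : H.filter (fun t => U ⊆ t) ⊆
        TT.biUnion (fun T => (Ls T).image (fun w => insert w (T ∪ U))) := by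
      intro t ht
      obtain ⟨ht1, ht2⟩ := Finset.mem_filter.1 ht
      obtain ⟨ht3, ht4, ht5⟩ := (hH t).1 ht1
      obtain ⟨w, hw1, hw2, hw3⟩ := exists_mem_span t U hU ht2 ht5
      have hU' : U ⊆ t.erase w := Finset.subset_erase.2 ⟨ht2, hw2⟩
      have hun : (t.erase w \ U) ∪ U = t.erase w := Finset.sdiff_union_of_subset hU'
      refine Finset.mem_biUnion.2 ⟨t.erase w \ U, ?_, ?_⟩
      · refine Finset.mem_filter.2 ⟨Finset.mem_powersetCard.2 ⟨?_, ?_⟩, ?_⟩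
        · exact Finset.sdiff_subset.trans ((Finset.erase_subset _ _).trans ht3)
        · rw [Finset.card_sdiff_of_subset hU', Finset.card_erase_of_mem hw1, ht4, hU]
          omega
        · rw [hun, Finset.card_erase_of_mem hw1, ht4]
          omega
      · refine Finset.mem_image.2 ⟨w, Finset.mem_filter.2 ⟨ht3 hw1, ?_⟩, ?_⟩
        · rw [hun]
          exact hw3
        · rw [hun, Finset.insert_erase hw1]
    refine (Finset.card_le_card h1).trans ?_
    refine (Finset.card_biUnion_le_card_mul _ _ (TT.sup (fun T => (Ls T).card)) ?_).trans ?_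
    · intro T hT
      exact Finset.card_image_le.trans (Finset.le_sup (f := fun T => (Ls T).card) hT)
    · gcongr
      refine (Finset.card_filter_le _ _).trans ?_
      rw [Finset.card_powersetCard]
      exact Nat.choose_le_pow _ _
  · apply pow_le_of_choose_le _ _ _ hHne
    rcases TT.eq_empty_or_nonempty with he | hne
    · rw [he]
      simp
    · obtain ⟨T, hT, hTe⟩ := Finset.exists_mem_eq_sup TT hne (fun T => (Ls T).card)
      rw [hTe, ← Finset.card_powersetCard]
      apply Finset.card_le_card
      intro t ht
      obtain ⟨ht1, ht2⟩ := Finset.mem_powersetCard.1 ht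
      rw [hH]
      refine ⟨ht1.trans (Finset.filter_subset _ _), ht2, ?_⟩
      refine dep_of_span (by omega) t (T ∪ U) ht2 (Finset.mem_filter.1 hT).2 ?_
      intro x hx
      exact (Finset.mem_filter.1 (ht1 hx)).2

theorem lower_bound {F : Type*} [Field F] [Fintype F] {d : ℕ} (hd : 2 ≤ d)
    (P : Finset (Fin d → F)) (H : Finset (Finset (Fin d → F))) (q : ℕ)
    (hF : Fintype.card F = q) (hq : 2 * (d + 1) ≤ q) (hP : q + 2 * (d + 1) ≤ P.card)
    (hH : ∀ t, t ∈ H ↔ t ⊆ P ∧ t.card = d + 1 ∧ ¬ AffineIndependent F ((↑) : t → (Fin d → F)))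
    (μ : ℝ) (hμ0 : 0 < μ) (hμ1 : μ ≤ 1) (hμ : μ ≤ (P.card : ℝ) / q - 1) :
    μ * (P.card : ℝ) ^ (d + 1) / q ≤
      (2 ^ (d - 1) * (d - 1).factorial * 16 * (2 ^ (d + 1) * ((d + 1) * (d + 1))) : ℕ) * (H.card : ℝ) := by
  classical
  let dep : Finset (Fin d → F) → Prop := fun t => ¬ AffineIndependent F ((↑) : t → (Fin d → F))
  have hHe : H = (P.powersetCard (d + 1)).filter dep := by
    ext t
    rw [hH, Finset.mem_filter, Finset.mem_powersetCard, and_assoc]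
  have hS : ∀ S ∈ P.powersetCard (d - 1), ⌈μ * (P.card : ℝ) ^ 2 / q / 16⌉₊ ≤
      ((P \ S).offDiag.filter (fun z => dep (insert z.1 (insert z.2 S)))).card := by
    intro S hS
    obtain ⟨hS1, hS2⟩ := Finset.mem_powersetCard.1 hS
    obtain ⟨cls, hcls⟩ := pencil hd S hS2
    have h1 := same_class_count (P \ S) cls
    rw [Finset.card_sdiff_of_subset hS1, hS2, Fintype.card_option, hF] at h1
    have h2 := pair_real d q P.card _ hd hq hP h1 μ hμ0 hμ1 hμ
    have h3 : ((P \ S).offDiag.filter (fun z => cls z.1 = cls z.2)).card ≤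
        ((P \ S).offDiag.filter (fun z => dep (insert z.1 (insert z.2 S)))).card := by
      apply Finset.card_le_card
      rintro ⟨x, y⟩ hz
      simp only [Finset.mem_filter, Finset.mem_offDiag, Finset.mem_sdiff] at hz ⊢
      refine ⟨hz.1, ?_⟩
      obtain ⟨f, hf, c, hc, hx, hy⟩ := hcls x y hz.2
      apply dep_of_functional _ _ f hf c
      · intro s hs
        simp only [Finset.mem_insert] at hs
        rcases hs with rfl | rfl | hs
        · exact hx
        · exact hy
        · exact hc s hs
      · rw [Finset.card_insert_of_notMem, Finset.card_insert_of_notMem hz.1.2.1.2, hS2]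
        · omega
        · simp [hz.1.1.2, hz.1.2.2]
    rw [Nat.ceil_le]
    have h4 : (((P \ S).offDiag.filter (fun z => cls z.1 = cls z.2)).card : ℝ) ≤
        (((P \ S).offDiag.filter (fun z => dep (insert z.1 (insert z.2 S)))).card : ℝ) := by
      exact_mod_cast h3
    linarith
  have h5 := double_count P d _ hd dep hS
  rw [← hHe] at h5
  have h6 := pow_le_two_choose (d - 1) P.card (by omega)
  have h5' : (P.card.choose (d - 1) : ℝ) * (⌈μ * (P.card : ℝ) ^ 2 / q / 16⌉₊ : ℝ) ≤
      (2 ^ (d + 1) * ((d + 1) * (d + 1)) : ℕ) * (H.card : ℝ) := by exact_mod_cast h5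
  have h6' : (P.card : ℝ) ^ (d - 1) ≤
     (2 ^ (d - 1) * (d - 1).factorial : ℕ) * (P.card.choose (d - 1) : ℝ) := by exact_mod_cast h6
  have h7 := Nat.le_ceil (μ * (P.card : ℝ) ^ 2 / q / 16)
  have e : μ * (P.card : ℝ) ^ (d + 1) / q =
      16 * ((P.card : ℝ) ^ (d - 1) * (μ * (P.card : ℝ) ^ 2 / q / 16)) := by
    have : d + 1 = (d - 1) + 2 := by omega
    rw [this, pow_add]
    ring
  rw [e]
  calc 16 * ((P.card : ℝ) ^ (d - 1) * (μ * (P.card : ℝ) ^ 2 / q / 16))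
      ≤ 16 * (((2 ^ (d - 1) * (d - 1).factorial : ℕ) * (P.card.choose (d - 1) : ℝ)) *
        (⌈μ * (P.card : ℝ) ^ 2 / q / 16⌉₊ : ℝ)) := by gcongr
    _ = 16 * (2 ^ (d - 1) * (d - 1).factorial : ℕ) * ((P.card.choose (d - 1) : ℝ) *
        (⌈μ * (P.card : ℝ) ^ 2 / q / 16⌉₊ : ℝ)) := by ring
    _ ≤ 16 * (2 ^ (d - 1) * (d - 1).factorial : ℕ) *
        ((2 ^ (d + 1) * ((d + 1) * (d + 1)) : ℕ) * (H.card : ℝ)) := by gcongr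
    _ = _ := by push_cast; ring

/-- properties of the factor `σ = μ^(-d/(d+1)) q^(-1/(d+1))`. -/
theorem sigma_props (d : ℕ) (hd : 2 ≤ d) (μ q : ℝ) (hμ0 : 0 < μ) (hμ1 : μ ≤ 1) (hq : 1 ≤ q) :
    ∃ σ : ℝ, 0 < σ ∧ σ = μ ^ (-(d : ℝ) / ((d : ℝ) + 1)) * q ^ (-(1 : ℝ) / ((d : ℝ) + 1)) ∧
      σ ^ (d + 1) * (μ ^ d * q) = 1 ∧ 1 ≤ q * σ ∧ 1 ≤ μ * q * σ ^ 2 := by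
  have hq0 : 0 < q := by linarith
  have hd1 : (0 : ℝ) < (d : ℝ) + 1 := by positivity
  refine ⟨_, by positivity, rfl, ?_, ?_, ?_⟩
  · rw [mul_pow, ← Real.rpow_mul_natCast hμ0.le, ← Real.rpow_mul_natCast hq0.le]
    have e1 : -(d : ℝ) / ((d : ℝ) + 1) * ((d + 1 : ℕ) : ℝ) = -(d : ℝ) := by
      push_cast; field_simp
    have e2 : -(1 : ℝ) / ((d : ℝ) + 1) * ((d + 1 : ℕ) : ℝ) = -1 := by
      push_cast; field_simp
    rw [e1, e2, Real.rpow_neg hμ0.le, Real.rpow_neg hq0.le, Real.rpow_natCast, Real.rpow_one]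
    field_simp
  · have h1 : 1 ≤ μ ^ (-(d : ℝ) / ((d : ℝ) + 1)) := by
      apply Real.one_le_rpow_of_pos_of_le_one_of_nonpos hμ0 hμ1
      rw [neg_div]
      have : 0 ≤ (d : ℝ) / ((d : ℝ) + 1) := by positivity
      linarith
    have h2 : 1 ≤ q * q ^ (-(1 : ℝ) / ((d : ℝ) + 1)) := by
      nth_rewrite 1 [← Real.rpow_one q]
      rw [← Real.rpow_add hq0]
      apply Real.one_le_rpow hq
      rw [neg_div]
      have : 1 / ((d : ℝ) + 1) ≤ 1 := by
        rw [div_le_one hd1]; linarith [show (0 : ℝ) ≤ d by positivity]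
      linarith
    nlinarith
  · have hd2 : (2 : ℝ) ≤ d := by exact_mod_cast hd
    have h1 : 1 ≤ μ * (μ ^ (-(d : ℝ) / ((d : ℝ) + 1))) ^ 2 := by
      rw [← Real.rpow_mul_natCast hμ0.le]
      nth_rewrite 1 [← Real.rpow_one μ]
      rw [← Real.rpow_add hμ0]
      apply Real.one_le_rpow_of_pos_of_le_one_of_nonpos hμ0 hμ1
      push_cast
      rw [neg_div]
      have : 1 / 2 ≤ (d : ℝ) / ((d : ℝ) + 1) := by
        rw [div_le_div_iff₀ (by norm_num) hd1]; linarith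
      linarith
    have h2 : 1 ≤ q * (q ^ (-(1 : ℝ) / ((d : ℝ) + 1))) ^ 2 := by
      rw [← Real.rpow_mul_natCast hq0.le]
      nth_rewrite 1 [← Real.rpow_one q]
      rw [← Real.rpow_add hq0]
      apply Real.one_le_rpow hq
      push_cast
      rw [neg_div]
      have : 1 / ((d : ℝ) + 1) ≤ 1 / 2 := by
        rw [div_le_div_iff₀ hd1 (by norm_num)]; linarith
      linarith
    have := one_le_mul_of_one_le_of_one_le h1 h2
    calc 1 ≤ _ := this
      _ = _ := by ring

theorem final_ge_three (d i : ℕ) (hi : 3 ≤ i) (hid : i ≤ d + 1) (μ q N σ h B : ℝ)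
    (hμ0 : 0 < μ) (hq : 1 ≤ q) (hN : 0 < N) (hσ : 0 < σ) (h1 : 1 ≤ q * σ)
    (h2 : 1 ≤ μ * q * σ ^ 2) (hB : μ * N ^ (d + 1) / q ≤ B * h) :
    N ^ (d + 1 - i) ≤ B * (h / N) * (σ * (N / q)⁻¹) ^ (i - 1) := by
  have hq0 : 0 < q := by linarith
  obtain ⟨j, rfl⟩ : ∃ j, i = j + 3 := ⟨i - 3, by omega⟩
  obtain ⟨r, hr⟩ : ∃ r, d = j + 2 + r := ⟨d - (j + 2), by omega⟩
  subst hr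
  have e1 : j + 2 + r + 1 - (j + 3) = r := by omega
  have e2 : j + 3 - 1 = j + 2 := by omega
  rw [e1, e2]
  calc N ^ r = N ^ r * (1 * 1 ^ j) := by simp
    _ ≤ N ^ r * ((μ * q * σ ^ 2) * (q * σ) ^ j) := by gcongr
    _ = (μ * N ^ (j + 2 + r + 1) / q) / N * (σ * (N / q)⁻¹) ^ (j + 2) := by
      have : σ * (N / q)⁻¹ = (q * σ) / N := by field_simp
      rw [this, div_pow]
      field_simp
      ring
    _ ≤ (B * h) / N * (σ * (N / q)⁻¹) ^ (j + 2) := by gcongr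
    _ = _ := by ring

theorem final_two (d : ℕ) (hd : 2 ≤ d) (μ q N σ h A B L : ℝ)
    (hμ0 : 0 < μ) (hq : 1 ≤ q) (hN : 0 < N) (hσ : 0 < σ) (hh : 0 ≤ h)
    (h1 : σ ^ (d + 1) * (μ ^ d * q) = 1) (hA : 1 ≤ A) (hB1 : 1 ≤ B) (hL0 : 0 ≤ L)
    (hL : L ^ (d + 1) ≤ A * h)
    (hB : μ * N ^ (d + 1) / q ≤ B * h) :
    N ^ (d - 2) * L ≤ A * B * (h / N) * (σ * (N / q)⁻¹) ^ 1 := by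
  have hq0 : 0 < q := by linarith
  have key : N ^ d * L ≤ A * B * h * (q * σ) := by
    have hne : d + 1 ≠ 0 := by omega
    rw [← pow_le_pow_iff_left₀ (by positivity) (by positivity) hne]
    have hB' : N ^ (d + 1) ≤ B * h * q / μ := by
      rw [le_div_iff₀ hμ0]
      rw [div_le_iff₀ hq0] at hB
      linarith
    calc (N ^ d * L) ^ (d + 1) = (N ^ (d + 1)) ^ d * L ^ (d + 1) := by
          rw [mul_pow, ← pow_mul, ← pow_mul, mul_comm d]
      _ ≤ (B * h * q / μ) ^ d * (A * h) := by gcongr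
      _ = (A ^ 1 * B ^ d) * h ^ (d + 1) * (q ^ d / μ ^ d * 1) := by
          rw [div_pow, mul_pow, mul_pow]; ring
      _ ≤ (A ^ (d + 1) * B ^ (d + 1)) * h ^ (d + 1) * (q ^ d / μ ^ d * 1) := by
          gcongr
          all_goals omega
      _ = (A ^ (d + 1) * B ^ (d + 1)) * h ^ (d + 1) *
          (q ^ d / μ ^ d * (σ ^ (d + 1) * (μ ^ d * q))) := by rw [h1]
      _ = _ := by
          rw [mul_pow, mul_pow, mul_pow, mul_pow, pow_succ q d]
          field_simp
  obtain ⟨r, rfl⟩ : ∃ r, d = r + 2 := ⟨d - 2, by omega⟩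
  simp only [Nat.add_sub_cancel]
  have : A * B * (h / N) * (σ * (N / q)⁻¹) ^ 1 = A * B * h * (q * σ) / N ^ 2 := by
    field_simp
  rw [this, le_div_iff₀ (by positivity)]
  calc N ^ r * L * N ^ 2 = N ^ (r + 2) * L := by ring
    _ ≤ _ := key


/-- For `|P| ≥ q + 2(d+1)`, the hypergraph of coplanar `(d+1)`-tuples in
`P` is `(c,τ)`-bounded with `k = |P|/q` and
`τ = (min{k−1,1})^{−d/(d+1)} · k⁻¹ · q^{−1/(d+1)}`: for every `2 ≤ i ≤ d+1`, every
`i`-element subset `U` of `P` is contained in at most `c·(|H|/|P|)·τ^{i−1}` edges. -/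
theorem coplanar_hypergraph_bounded (d : ℕ) (hd : 2 ≤ d) :
    ∃ c : ℝ, 0 < c ∧ ∀ q : ℕ, IsPrimePow q → 2 * (d + 1) ≤ q →
      ∀ (F : Type) [Field F] [Fintype F], Fintype.card F = q →
        ∀ P : Finset (Fin d → F), q + 2 * (d + 1) ≤ P.card →
          ∀ i : ℕ, 2 ≤ i → i ≤ d + 1 →
            ∀ U : Finset (Fin d → F), U ⊆ P → U.card = i →
              (({t ∈ coplanarEdges F d P | U ⊆ t}).ncard : ℝ) ≤
                c * (((coplanarEdges F d P).ncard : ℝ) / (P.card : ℝ)) *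
                  ((min ((P.card : ℝ) / (q : ℝ) - 1) 1) ^ (-(d : ℝ) / ((d : ℝ) + 1)) *
                    ((P.card : ℝ) / (q : ℝ))⁻¹ *
                    (q : ℝ) ^ (-(1 : ℝ) / ((d : ℝ) + 1))) ^ (i - 1) := by
  classical
  let A : ℕ := (2 * (d + 1)) ^ (d + 1) + 2 ^ (d + 1) * (d + 1).factorial
  let B : ℕ := 2 ^ (d - 1) * (d - 1).factorial * 16 * (2 ^ (d + 1) * ((d + 1) * (d + 1)))
  have hA : 1 ≤ A := Nat.one_le_iff_ne_zero.2 (by positivity)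
  have hB : 1 ≤ B := Nat.one_le_iff_ne_zero.2 (by positivity)
  have hA' : (1 : ℝ) ≤ A := by exact_mod_cast hA
  have hB' : (1 : ℝ) ≤ B := by exact_mod_cast hB
  refine ⟨(A : ℝ) * B, by positivity, ?_⟩
  intro q _ hq F _ _ hF P hP i hi hid U _ hUc
  let H : Finset (Finset (Fin d → F)) := (P.powersetCard (d + 1)).filter
    (fun t => ¬ AffineIndependent F ((↑) : t → (Fin d → F)))
  have hH : ∀ t, t ∈ H ↔ t ⊆ P ∧ t.card = d + 1 ∧
      ¬ AffineIndependent F ((↑) : t → (Fin d → F)) := by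
    intro t
    simp only [H]
    rw [Finset.mem_filter, Finset.mem_powersetCard, and_assoc]
  have hE : coplanarEdges F d P = (H : Set (Finset (Fin d → F))) := by
    ext t
    exact (hH t).symm
  have hE2 : {t ∈ coplanarEdges F d P | U ⊆ t} =
      ((H.filter (fun t => U ⊆ t) : Finset (Finset (Fin d → F))) : Set (Finset (Fin d → F))) := by
    rw [hE]
    ext t
    simp
  rw [hE2, hE, Set.ncard_coe_finset, Set.ncard_coe_finset]
  have hq1 : (1 : ℝ) ≤ q := by
    have : 1 ≤ q := by omega
    exact_mod_cast this
  have hq0 : (0 : ℝ) < q := by linarith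
  have hNq : (q : ℝ) < P.card := by
    have : q < P.card := by omega
    exact_mod_cast this
  have hN0 : (0 : ℝ) < P.card := by linarith
  set μ : ℝ := min ((P.card : ℝ) / (q : ℝ) - 1) 1 with hμdef
  have hμ0 : 0 < μ := by
    apply lt_min _ one_pos
    rw [sub_pos, lt_div_iff₀ hq0]
    linarith
  have hμ1 : μ ≤ 1 := min_le_right _ _
  have hμ : μ ≤ (P.card : ℝ) / q - 1 := min_le_left _ _
  have hlow : μ * (P.card : ℝ) ^ (d + 1) / q ≤ (B : ℝ) * (H.card : ℝ) :=
    lower_bound hd P H q hF hq hP hH μ hμ0 hμ1 hμ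
  obtain ⟨σ, hσ0, hσ, hs1, hs2, hs3⟩ := sigma_props d hd μ q hμ0 hμ1 hq1
  have hτ : μ ^ (-(d : ℝ) / ((d : ℝ) + 1)) * ((P.card : ℝ) / (q : ℝ))⁻¹ *
      (q : ℝ) ^ (-(1 : ℝ) / ((d : ℝ) + 1)) = σ * ((P.card : ℝ) / (q : ℝ))⁻¹ := by
    rw [hσ]; ring
  rw [hτ]
  rcases hi.eq_or_lt with rfl | hi3
  · have hne : 1 ≤ H.card := by
      by_contra hcon
      have h0 : H.card = 0 := by omega
      rw [h0] at hlow
      have : 0 < μ * (P.card : ℝ) ^ (d + 1) / q := by positivity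
      simp at hlow
      linarith
    obtain ⟨L, hL1, hL2⟩ := upper_two hd P U H hH hUc hne
    have hL1' : ((H.filter (fun t => U ⊆ t)).card : ℝ) ≤ (P.card : ℝ) ^ (d - 2) * L := by
      exact_mod_cast hL1
    have hL2' : (L : ℝ) ^ (d + 1) ≤ (A : ℝ) * H.card := by exact_mod_cast hL2
    exact hL1'.trans (final_two d hd μ q P.card σ H.card A B L hμ0 hq1 hN0 hσ0 (by positivity)
      hs1 hA' hB' (by positivity) hL2' hlow)
  · have hU := upper_gen P U H (d + 1) i (Finset.filter_subset _ _) hUc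
    have hU' : ((H.filter (fun t => U ⊆ t)).card : ℝ) ≤ (P.card : ℝ) ^ (d + 1 - i) := by
      exact_mod_cast hU
    refine hU'.trans ((final_ge_three d i hi3 hid μ q P.card σ H.card B hμ0 hq1 hN0 hσ0 hs2 hs3
      hlow).trans ?_)
    have : (B : ℝ) ≤ A * B := by nlinarith
    gcongr
end
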